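/- arXiv:math/0004149 — 2 statements merged into one kernel-verified Lean document; each statement's English description precedes it below -/
import Mathlib

section
/- There is an absolute constant A > 0 such that for every positive integer k and every real R ≥ 1, one has |Σ_{n ≤ R, gcd(n,k) = 1} μ²(n)/φ(n) − (φ(k)/k)·(log R + c + v(k))| ≤ A·w(k)/√R. -/
open Finset ArithmeticFunction

/-- The Generalized Riemann Hypothesis for Dirichlet L-functions: every zero of a
Dirichlet L-function in the critical strip lies on the critical line. -/
def GRH : Prop :=
  ∀ (N : ℕ) [NeZero N] (χ : DirichletCharacter ℂ N) (s : ℂ),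
    DirichletCharacter.LFunction χ s = 0 → 0 < s.re → s.re < 1 → s.re = 1 / 2

/-- `ψ(x; q, a) = ∑_{n ≤ x, n ≡ a (mod q)} Λ(n)`. -/
noncomputable def psi (x : ℝ) (q a : ℕ) : ℝ :=
  ∑ n ∈ (Finset.Icc 1 ⌊x⌋₊).filter (fun n : ℕ => (n : ZMod q) = (a : ZMod q)),
    ArithmeticFunction.vonMangoldt n

/-- `I(x,h,q,a) = ∫_x^{2x} (ψ(y+h;q,a) − ψ(y;q,a) − h/φ(q))² dy`. -/
noncomputable def momentI (x h : ℝ) (q a : ℕ) : ℝ :=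
  ∫ y in x..(2 * x), (psi (y + h) q a - psi y q a - h / (q.totient : ℝ)) ^ 2

/-- `λ_R(n) = ∑_{r ≤ R} (μ²(r)/φ(r)) ∑_{d ∣ (r,n)} d·μ(d)`. -/
noncomputable def lamR (R : ℝ) (n : ℕ) : ℝ :=
  ∑ r ∈ Finset.Icc 1 ⌊R⌋₊,
    ((ArithmeticFunction.moebius r : ℝ) ^ 2 / (r.totient : ℝ)) *
      ∑ d ∈ (Nat.gcd r n).divisors, (d : ℝ) * (ArithmeticFunction.moebius d : ℝ)

/-- `c = γ + ∑_p (log p)/(p(p−1))`. -/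
noncomputable def cGY : ℝ :=
  Real.eulerMascheroniConstant +
    ∑' p : Nat.Primes, Real.log (p : ℕ) / (((p : ℕ) : ℝ) * (((p : ℕ) : ℝ) - 1))

/-- `v(k) = ∑_{p ∣ k} (log p)/p`. -/
noncomputable def vGY (k : ℕ) : ℝ := ∑ p ∈ k.primeFactors, Real.log p / (p : ℝ)

/-- `w(k) = ∏_{p ∣ k} (1 + 1/√p)`. -/
noncomputable def wGY (k : ℕ) : ℝ := ∏ p ∈ k.primeFactors, (1 + 1 / Real.sqrt p)

/-- `g(k) = ∏_{p ∣ k} (1 + p/(p−1))`. -/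
noncomputable def gGY (k : ℕ) : ℝ := ∏ p ∈ k.primeFactors, (1 + (p : ℝ) / ((p : ℝ) - 1))

/-- The twin prime constant `C = ∏_{p > 2} (1 − 1/(p−1)²)`. -/
noncomputable def twinC : ℝ :=
  ∏' p : Nat.Primes, (if 2 < (p : ℕ) then 1 - 1 / (((p : ℕ) : ℝ) - 1) ^ 2 else 1)

/-- The singular series `𝔖(k)`. -/
noncomputable def singSeries (k : ℕ) : ℝ :=
  if 2 ∣ k ∧ k ≠ 0 then
    2 * twinC * ∏ p ∈ k.primeFactors.filter (fun p => 2 < p), ((p : ℝ) - 1) / ((p : ℝ) - 2)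
  else 0

/-- `f(n,x,h)`, the length of the interval `[x,2x] ∩ [n−h,n)`. -/
noncomputable def flen (n : ℕ) (x h : ℝ) : ℝ :=
  if x ≤ n ∧ (n : ℝ) < x + h then (n : ℝ) - x
  else if x + h ≤ n ∧ (n : ℝ) ≤ 2 * x then h
  else if 2 * x < n ∧ (n : ℝ) ≤ 2 * x + h then 2 * x - n + h
  else 0


section
open Finset ArithmeticFunction

noncomputable def hT (x : ℝ) : ℝ := ∑ m ∈ Finset.Icc 1 ⌊x⌋₊, 1 / (m : ℝ)

lemma hT_zero {x : ℝ} (hx : x < 1) : hT x = 0 := by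
  unfold hT
  rw [Nat.floor_eq_zero.mpr hx]; simp

noncomputable def hE (x : ℝ) : ℝ := hT x - Real.log x - Real.eulerMascheroniConstant

lemma hT_eq (x : ℝ) : hT x = (harmonic ⌊x⌋₊ : ℝ) := by
  rw [harmonic_eq_sum_Icc]; unfold hT; push_cast; simp

lemma hE_big {x : ℝ} (hx : 1 ≤ x) : |hE x| ≤ 2 / x := by
  have hx0 : 0 < x := by linarith
  have hn : 1 ≤ ⌊x⌋₊ := (Nat.one_le_floor_iff x).mpr hx
  set n := ⌊x⌋₊ with hnd
  have hn0 : (0 : ℝ) < n := by exact_mod_cast hn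
  have hn1 : (1 : ℝ) ≤ n := by exact_mod_cast hn
  have h1 : (n : ℝ) ≤ x := Nat.floor_le hx0.le
  have h2 : x < n + 1 := Nat.lt_floor_add_one x
  have a1 := Real.eulerMascheroniSeq_lt_eulerMascheroniConstant n
  have a2 := Real.eulerMascheroniConstant_lt_eulerMascheroniSeq' n
  unfold Real.eulerMascheroniSeq at a1
  unfold Real.eulerMascheroniSeq' at a2
  rw [if_neg (by omega)] at a2
  unfold hE
  rw [hT_eq, ← hnd]
  have b1 : Real.log ((n + 1 : ℝ) / x) ≤ (n + 1 : ℝ) / x - 1 :=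
    Real.log_le_sub_one_of_pos (by positivity)
  have b2 : Real.log (x / n) ≤ x / n - 1 := Real.log_le_sub_one_of_pos (by positivity)
  rw [Real.log_div (by positivity) (by positivity)] at b1 b2
  have c1 : (n + 1 : ℝ) / x - 1 ≤ 2 / x := by
    rw [div_sub_one (by positivity)]; gcongr; linarith
  have c2 : x / n - 1 ≤ 2 / x := by
    rw [div_sub_one (by positivity), div_le_div_iff₀ hn0 hx0]
    nlinarith
  rw [abs_le]; constructor <;> linarith

lemma hE_small {x : ℝ} (h0 : 0 < x) (hx : x < 1) : |hE x| ≤ 1 - Real.log x := by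
  unfold hE
  rw [hT_zero hx]
  have := Real.one_half_lt_eulerMascheroniConstant
  have := Real.eulerMascheroniConstant_lt_two_thirds
  have := Real.log_neg h0 hx
  rw [abs_le]; constructor <;> linarith

lemma hE_bound {t : ℝ} (ht : 0 < t) :
    |hE (1 / t ^ 2)| ≤ 16 * t ^ 2 / ((1 + t) * √(1 + t)) := by
  rcases le_or_gt t 1 with h | h
  · have h1 : (1 : ℝ) ≤ 1 / t ^ 2 := by
      rw [le_div_iff₀ (by positivity)]; nlinarith
    refine (hE_big h1).trans ?_
    have h2 : √(1 + t) ≤ 2 := by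
      rw [Real.sqrt_le_left (by norm_num)]; linarith
    rw [div_div_eq_mul_div, div_one, le_div_iff₀ (by positivity)]
    have h3 : (1 + t) * √(1 + t) ≤ 2 * 2 := by gcongr; linarith
    nlinarith [sq_nonneg t]
  · have h1 : 1 / t ^ 2 < 1 := by
      rw [div_lt_one (by positivity)]; nlinarith
    refine (hE_small (by positivity) h1).trans ?_
    set s := √t with hs
    have hs0 : 0 < s := Real.sqrt_pos.mpr ht
    have hst : t = s ^ 2 := (Real.sq_sqrt ht.le).symm
    have h2 : √(1 + t) ≤ 2 * s := by
      rw [Real.sqrt_le_left (by positivity)]; nlinarith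
    have h3 : Real.log s ≤ s - 1 := Real.log_le_sub_one_of_pos hs0
    have h4 : Real.log (1 / t ^ 2) = - (4 * Real.log s) := by
      rw [hst, one_div, Real.log_inv, ← pow_mul, Real.log_pow]; norm_num
    rw [h4]
    have h5 : (1 + t) * √(1 + t) ≤ (2 * t) * (2 * s) := by gcongr; linarith
    calc 1 - -(4 * Real.log s) ≤ 4 * s := by linarith
      _ = 16 * t ^ 2 / ((2 * t) * (2 * s)) := by rw [hst]; field_simp; norm_num
      _ ≤ _ := by gcongr

lemma tele_step {z x : ℝ} (hz : 0 < z) (hx : 1 ≤ x) :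
    1 / ((x + 1 / z) * √(x + 1 / z)) ≤ 2 * z * (1 / √x - 1 / √(x + 1 / z)) := by
  have hx0 : 0 < x := by linarith
  have hiz : 0 < 1 / z := by positivity
  set a := √x
  set b := √(x + 1 / z)
  have ha : 0 < a := Real.sqrt_pos.mpr hx0
  have hab : a ≤ b := Real.sqrt_le_sqrt (by linarith)
  have ha2 : a ^ 2 = x := Real.sq_sqrt hx0.le
  have hb2 : b ^ 2 = x + 1 / z := Real.sq_sqrt (by positivity)
  have hb : 0 < b := by linarith
  have hz2 : z = 1 / (b ^ 2 - a ^ 2) := by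
    rw [hb2, ha2]; simp
  have hlt : a < b := Real.sqrt_lt_sqrt hx0.le (by linarith)
  rw [← hb2]
  have : 2 * z * (1 / a - 1 / b) = 2 / ((b + a) * (a * b)) := by
    rw [hz2]
    have h1 : b ^ 2 - a ^ 2 ≠ 0 := by nlinarith
    have h2 : b + a ≠ 0 := by positivity
    rw [show b ^ 2 - a ^ 2 = (b - a) * (b + a) by ring] at *
    have h3 : b - a ≠ 0 := by linarith
    field_simp
  rw [this, div_le_div_iff₀ (by positivity) (by positivity)]
  have h1 : (b + a) * (a * b) ≤ (b + b) * (b * b) := by gcongr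
  nlinarith

lemma tele_sum {z : ℝ} (hz : 0 < z) (N : ℕ) :
    ∑ d ∈ range N, 1 / ((1 + (d + 1 : ℕ) / z) * √(1 + (d + 1 : ℕ) / z)) ≤
      2 * z * (1 - 1 / √(1 + N / z)) := by
  induction N with
  | zero => simp
  | succ N ih =>
    rw [sum_range_succ]
    have h := tele_step (x := 1 + N / z) hz (by linarith [show (0:ℝ) ≤ N / z by positivity])
    have e : 1 + (N : ℝ) / z + 1 / z = 1 + ((N + 1 : ℕ) : ℝ) / z := by push_cast; ring
    rw [e] at h
    linarith

lemma log_le_two_sqrt {x : ℝ} (hx : 0 ≤ x) : Real.log x ≤ 2 * √x := by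
  rcases hx.eq_or_lt with rfl | h
  · simp
  have h3 : Real.log √x ≤ √x - 1 := Real.log_le_sub_one_of_pos (Real.sqrt_pos.mpr h)
  rw [Real.log_sqrt hx] at h3
  linarith

lemma summable_sqrt_div_sq : Summable (fun d : ℕ => √(d : ℝ) / (d : ℝ) ^ 2) := by
  have h : Summable (fun d : ℕ => (d : ℝ) ^ (-(3 / 2) : ℝ)) :=
    Real.summable_nat_rpow.mpr (by norm_num)
  refine h.congr fun d => ?_
  rcases Nat.eq_zero_or_pos d with rfl | hd
  · rw [Nat.cast_zero, Real.zero_rpow (by norm_num)]; simp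
  · have : (0 : ℝ) < d := by exact_mod_cast hd
    rw [Real.sqrt_eq_rpow, ← Real.rpow_natCast, ← Real.rpow_sub this]; norm_num

lemma lemV (m : ℕ → ℝ) (hm : ∀ d, |m d| ≤ 1) :
    ∃ α β : ℝ, ∀ (y : ℝ) (N : ℕ), 0 < y → y < N + 1 →
      |∑ d ∈ Icc 1 N, m d / (d : ℝ) ^ 2 * hT (y / (d : ℝ) ^ 2) - α * Real.log y - β|
        ≤ 32 / √y := by
  have hs1 : Summable (fun d : ℕ => m d / (d : ℝ) ^ 2) := by
    refine Summable.of_norm_bounded (Real.summable_one_div_nat_pow.mpr (one_lt_two)) fun d => ?_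
    rw [norm_div, Real.norm_eq_abs, norm_pow, Real.norm_natCast]
    gcongr; exact hm d
  have hs2 : Summable (fun d : ℕ => m d / (d : ℝ) ^ 2 * Real.log d) := by
    refine Summable.of_norm_bounded (summable_sqrt_div_sq.mul_left 2) fun d => ?_
    rw [norm_mul, norm_div, Real.norm_eq_abs, norm_pow, Real.norm_natCast, Real.norm_eq_abs,
      abs_of_nonneg (Real.log_natCast_nonneg d)]
    calc |m d| / (d : ℝ) ^ 2 * Real.log d ≤ 1 / (d : ℝ) ^ 2 * (2 * √d) := by
          gcongr
          · exact hm d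
          · exact log_le_two_sqrt (by positivity)
      _ = _ := by ring
  refine ⟨∑' d, m d / (d : ℝ) ^ 2,
    Real.eulerMascheroniConstant * (∑' d, m d / (d : ℝ) ^ 2)
      - 2 * ∑' d : ℕ, m d / (d : ℝ) ^ 2 * Real.log d, fun y N hy hN => ?_⟩
  have hS : HasSum (fun d : ℕ => m d / (d : ℝ) ^ 2 * hT (y / (d : ℝ) ^ 2))
      (∑ d ∈ Icc 1 N, m d / (d : ℝ) ^ 2 * hT (y / (d : ℝ) ^ 2)) := by
    refine hasSum_sum_of_ne_finset_zero fun d hd => ?_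
    rcases Nat.eq_zero_or_pos d with rfl | hd0
    · simp
    have hd1 : N + 1 ≤ d := by
      by_contra hh; exact hd (mem_Icc.mpr ⟨hd0, by omega⟩)
    have hd2 : (N : ℝ) + 1 ≤ d := by exact_mod_cast hd1
    have hd3 : (1 : ℝ) ≤ d := by exact_mod_cast hd0
    rw [hT_zero, mul_zero]
    rw [div_lt_one (by positivity)]; nlinarith
  have hH := (hS.sub (hs1.hasSum.mul_right (Real.log y))).sub
    ((hs1.hasSum.mul_left Real.eulerMascheroniConstant).sub (hs2.hasSum.mul_left 2))
  refine le_of_tendsto' ((hH.tendsto_sum_nat.comp (Filter.tendsto_add_atTop_nat 1)).abs) fun M => ?_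
  simp only [Function.comp]
  rw [sum_range_succ']
  simp only [Nat.cast_zero, ne_eq, OfNat.ofNat_ne_zero, not_false_eq_true, zero_pow, div_zero,
    zero_mul, mul_zero, sub_zero, add_zero]
  have hz : 0 < √y := Real.sqrt_pos.mpr hy
  refine (abs_sum_le_sum_abs _ _).trans ?_
  have key : ∀ d ∈ range M, |m (d + 1) / ((d + 1 : ℕ) : ℝ) ^ 2 * hT (y / ((d + 1 : ℕ) : ℝ) ^ 2)
      - m (d + 1) / ((d + 1 : ℕ) : ℝ) ^ 2 * Real.log y -
      (Real.eulerMascheroniConstant * (m (d + 1) / ((d + 1 : ℕ) : ℝ) ^ 2) -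
        2 * (m (d + 1) / ((d + 1 : ℕ) : ℝ) ^ 2 * Real.log ((d + 1 : ℕ) : ℝ)))| ≤
      16 / y * (1 / ((1 + (d + 1 : ℕ) / √y) * √(1 + (d + 1 : ℕ) / √y))) := by
    intro d _
    have hD : (0 : ℝ) < ((d + 1 : ℕ) : ℝ) := by positivity
    set D : ℝ := ((d + 1 : ℕ) : ℝ)
    have hlog : Real.log (y / D ^ 2) = Real.log y - 2 * Real.log D := by
      rw [Real.log_div hy.ne' (by positivity), Real.log_pow]; norm_num
    have e1 : m (d + 1) / D ^ 2 * hT (y / D ^ 2) - m (d + 1) / D ^ 2 * Real.log y -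
      (Real.eulerMascheroniConstant * (m (d + 1) / D ^ 2) -
        2 * (m (d + 1) / D ^ 2 * Real.log D)) = m (d + 1) / D ^ 2 * hE (y / D ^ 2) := by
      unfold hE; rw [hlog]; ring
    rw [e1, abs_mul, abs_div, abs_of_nonneg (sq_nonneg D)]
    have e2 : y / D ^ 2 = 1 / (D / √y) ^ 2 := by
      rw [div_pow, Real.sq_sqrt hy.le, one_div_div]
    have := hE_bound (t := D / √y) (by positivity)
    rw [← e2] at this
    calc |m (d + 1)| / D ^ 2 * |hE (y / D ^ 2)| ≤ 1 / D ^ 2 *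
          (16 * (D / √y) ^ 2 / ((1 + D / √y) * √(1 + D / √y))) := by
          gcongr; exact hm _
      _ = _ := by
          rw [div_pow, Real.sq_sqrt hy.le]; field_simp
  refine (sum_le_sum key).trans ?_
  rw [← mul_sum]
  calc _ ≤ 16 / y * (2 * √y * (1 - 1 / √(1 + M / √y))) := by
        gcongr; exact tele_sum hz M
    _ ≤ 16 / y * (2 * √y * 1) := by
        gcongr; linarith [show 0 ≤ 1 / √(1 + M / √y) by positivity]
    _ = 32 / √y := by
        nth_rewrite 1 [← Real.mul_self_sqrt hy.le]; field_simp; norm_num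

end

section
open Finset ArithmeticFunction

lemma sum_mult (x : ℝ) (D : ℕ) (hD : 1 ≤ D) (g : ℕ → ℝ) :
    ∑ n ∈ (Icc 1 ⌊x⌋₊).filter (fun n => D ∣ n), g n = ∑ m ∈ Icc 1 ⌊x / D⌋₊, g (D * m) := by
  symm
  refine sum_bij' (fun m _ => D * m) (fun n _ => n / D) ?_ ?_ ?_ ?_ ?_
  · intro m hm
    rw [mem_Icc, Nat.floor_div_natCast] at hm
    rw [mem_filter, mem_Icc]
    refine ⟨⟨Nat.mul_pos hD hm.1, ?_⟩, dvd_mul_right _ _⟩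
    have := (Nat.le_div_iff_mul_le hD).mp hm.2
    rwa [mul_comm]
  · intro n hn
    rw [mem_filter, mem_Icc] at hn
    rw [mem_Icc, Nat.floor_div_natCast]
    exact ⟨Nat.div_pos (Nat.le_of_dvd hn.1.1 hn.2) hD, Nat.div_le_div_right hn.1.2⟩
  · intro m _
    exact Nat.mul_div_cancel_left m hD
  · intro n hn
    rw [mem_filter] at hn
    exact Nat.mul_div_cancel' hn.2
  · intros; rfl

lemma sum_moebius_divisors (n : ℕ) :
    ∑ d ∈ n.divisors, moebius d = if n = 1 then 1 else 0 := by
  rw [← coe_mul_zeta_apply, moebius_mul_coe_zeta, one_apply]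

lemma sq_dvd_sqfree {d a b : ℕ} (hb : b ≠ 0) (ha : Squarefree a) (h : d ^ 2 ∣ b ^ 2 * a) :
    d ∣ b := by
  obtain ⟨g, d', b', hg, hc, rfl, rfl⟩ := Nat.exists_coprime' (m := d) (n := b)
    (Nat.gcd_pos_of_pos_right d (Nat.pos_of_ne_zero hb))
  have h1 : d' ^ 2 * g ^ 2 ∣ (b' ^ 2 * a) * g ^ 2 := by
    convert h using 1 <;> ring
  have h2 : d' ^ 2 ∣ b' ^ 2 * a := Nat.dvd_of_mul_dvd_mul_right (by positivity) h1
  have h3 : d' ^ 2 ∣ a := (Nat.Coprime.pow 2 2 hc).dvd_of_dvd_mul_left h2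
  have h4 := ha d' (by rwa [← pow_two])
  rw [Nat.isUnit_iff] at h4
  subst h4
  simp

lemma sum_sq_moebius (n N : ℕ) (hn : 1 ≤ n) (hN : n ≤ N) :
    ∑ d ∈ (Icc 1 N).filter (fun d => d ^ 2 ∣ n), moebius d = moebius n ^ 2 := by
  obtain ⟨a, b, rfl, ha⟩ := Nat.sq_mul_squarefree n
  have hb : b ≠ 0 := by rintro rfl; simp at hn
  have ha0 : a ≠ 0 := ha.ne_zero
  have e : (Icc 1 N).filter (fun d => d ^ 2 ∣ b ^ 2 * a) = b.divisors := by
    ext d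
    simp only [mem_filter, mem_Icc, Nat.mem_divisors]
    constructor
    · rintro ⟨_, h⟩; exact ⟨sq_dvd_sqfree hb ha h, hb⟩
    · rintro ⟨h, _⟩
      have h1 : d ^ 2 ∣ b ^ 2 * a := Dvd.dvd.mul_right (pow_dvd_pow_of_dvd h 2) a
      have h2 := Nat.le_of_dvd hn h1
      have h3 : 1 ≤ d := Nat.pos_of_dvd_of_pos h (Nat.pos_of_ne_zero hb)
      refine ⟨⟨h3, ?_⟩, h1⟩
      nlinarith
  rw [e, sum_moebius_divisors, moebius_sq]
  by_cases h : b = 1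
  · subst h; simp [ha]
  · rw [if_neg h, if_neg]
    intro hs
    have := hs b (by rw [← pow_two]; exact dvd_mul_right _ _)
    exact h (Nat.isUnit_iff.mp this)

noncomputable def hQ (k : ℕ) (x : ℝ) : ℝ :=
  ∑ n ∈ (Icc 1 ⌊x⌋₊).filter (fun n => Nat.gcd n k = 1), (moebius n : ℝ) ^ 2 / (n : ℝ)

noncomputable def hm (k d : ℕ) : ℝ := if Nat.gcd d k = 1 then (moebius d : ℝ) else 0

lemma hm_le (k d : ℕ) : |hm k d| ≤ 1 := by
  unfold hm
  split_ifs
  · exact_mod_cast abs_moebius_le_one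
  · simp

lemma char_identity (k n N : ℕ) (hk : 1 ≤ k) (hn : 1 ≤ n) (hN : n ≤ N) :
    ∑ e ∈ k.divisors, ∑ d ∈ Icc 1 N,
      (if e * d ^ 2 ∣ n then (moebius e : ℝ) * hm k d else 0)
      = if Nat.gcd n k = 1 then (moebius n : ℝ) ^ 2 else 0 := by
  have h1 : ∀ e ∈ k.divisors, ∀ d ∈ Icc 1 N,
      (if e * d ^ 2 ∣ n then (moebius e : ℝ) * hm k d else 0) =
      (if e ∣ n then (moebius e : ℝ) else 0) * (if d ^ 2 ∣ n then hm k d else 0) := by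
    intro e he d hd
    by_cases hc : Nat.gcd d k = 1
    · have hcop : Nat.Coprime e (d ^ 2) :=
        (Nat.Coprime.pow_left 2 (Nat.Coprime.coprime_dvd_right (Nat.dvd_of_mem_divisors he) hc)).symm
      have : e * d ^ 2 ∣ n ↔ e ∣ n ∧ d ^ 2 ∣ n :=
        ⟨fun h => ⟨dvd_of_mul_right_dvd h, dvd_of_mul_left_dvd h⟩,
          fun h => hcop.mul_dvd_of_dvd_of_dvd h.1 h.2⟩
      by_cases a1 : e ∣ n <;> by_cases a2 : d ^ 2 ∣ n <;> simp [this, a1, a2]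
    · simp [hm, hc]
  rw [sum_congr rfl (fun e he => sum_congr rfl (h1 e he))]
  rw [← sum_mul_sum]
  have h2 : ∑ e ∈ k.divisors, (if e ∣ n then (moebius e : ℝ) else 0) =
      if Nat.gcd n k = 1 then 1 else 0 := by
    rw [← sum_filter]
    have : k.divisors.filter (fun e => e ∣ n) = (Nat.gcd n k).divisors := by
      ext e
      simp only [mem_filter, Nat.mem_divisors, Nat.dvd_gcd_iff]
      have : Nat.gcd n k ≠ 0 := (Nat.gcd_pos_of_pos_left k hn).ne'
      constructor
      · rintro ⟨⟨a, _⟩, b⟩; exact ⟨⟨b, a⟩, this⟩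
      · rintro ⟨⟨a, b⟩, _⟩; exact ⟨⟨b, by omega⟩, a⟩
    rw [this]
    have := sum_moebius_divisors (Nat.gcd n k)
    exact_mod_cast this
  rw [h2]
  split_ifs with hg
  · rw [one_mul]
    have := sum_sq_moebius n N hn hN
    have h3 : ∑ d ∈ (Icc 1 N).filter (fun d => d ^ 2 ∣ n), (moebius d : ℝ) = (moebius n : ℝ) ^ 2 := by
      exact_mod_cast this
    rw [← h3, ← sum_filter]
    refine sum_congr rfl fun d hd => ?_
    rw [mem_filter] at hd
    unfold hm
    rw [if_pos]
    have : d ∣ n := (dvd_pow_self d two_ne_zero).trans hd.2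
    exact Nat.Coprime.coprime_dvd_left this hg
  · simp

lemma hQ_eq (k : ℕ) (hk : 1 ≤ k) (x : ℝ) :
    hQ k x = ∑ e ∈ k.divisors, (moebius e : ℝ) / e *
      ∑ d ∈ Icc 1 ⌊x⌋₊, hm k d / (d : ℝ) ^ 2 * hT (x / e / (d : ℝ) ^ 2) := by
  have h1 : ∀ e ∈ k.divisors, (moebius e : ℝ) / e *
      ∑ d ∈ Icc 1 ⌊x⌋₊, hm k d / (d : ℝ) ^ 2 * hT (x / e / (d : ℝ) ^ 2) =
      ∑ d ∈ Icc 1 ⌊x⌋₊, ∑ n ∈ Icc 1 ⌊x⌋₊,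
        (if e * d ^ 2 ∣ n then (moebius e : ℝ) * hm k d else 0) * (1 / (n : ℝ)) := by
    intro e he
    rw [mul_sum]
    refine sum_congr rfl fun d hd => ?_
    have he0 : 0 < e := Nat.pos_of_mem_divisors he
    have hd0 : 0 < d := (mem_Icc.mp hd).1
    have := sum_mult x (e * d ^ 2) (Nat.mul_pos he0 (pow_pos hd0 2))
      (fun n => (moebius e : ℝ) * hm k d * (1 / (n : ℝ)))
    rw [sum_filter] at this
    simp only [ite_mul, zero_mul]
    rw [this]
    unfold hT
    rw [div_div, mul_sum, mul_sum]
    push_cast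
    refine sum_congr rfl fun m _ => ?_
    field_simp
  rw [sum_congr rfl h1]
  unfold hQ
  rw [sum_filter]
  have h2 : ∑ e ∈ k.divisors, ∑ d ∈ Icc 1 ⌊x⌋₊, ∑ n ∈ Icc 1 ⌊x⌋₊,
        (if e * d ^ 2 ∣ n then (moebius e : ℝ) * hm k d else 0) * (1 / (n : ℝ)) =
      ∑ e ∈ k.divisors, ∑ n ∈ Icc 1 ⌊x⌋₊, ∑ d ∈ Icc 1 ⌊x⌋₊,
        (if e * d ^ 2 ∣ n then (moebius e : ℝ) * hm k d else 0) * (1 / (n : ℝ)) :=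
    sum_congr rfl fun e _ => sum_comm
  rw [h2, sum_comm]
  refine sum_congr rfl fun n hn => ?_
  rw [mem_Icc] at hn
  simp_rw [← sum_mul]
  rw [char_identity k n ⌊x⌋₊ hk hn.1 hn.2]
  split_ifs
  · ring
  · ring

lemma wGY_eq (k : ℕ) (hk : 1 ≤ k) : ∑ e ∈ k.divisors, |(moebius e : ℝ)| / √(e : ℝ) = wGY k := by
  unfold wGY
  rw [prod_one_add]
  have h := Nat.sum_divisors_filter_squarefree (n := k) (by omega) (f := fun e : ℕ => 1 / √(e : ℝ))
  have e1 : (UniqueFactorizationMonoid.normalizedFactors k).toFinset = k.primeFactors := by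
    rw [Nat.factors_eq]; rfl
  rw [e1, sum_filter] at h
  have e2 : ∀ e ∈ k.divisors, |(moebius e : ℝ)| / √(e : ℝ) =
      if Squarefree e then 1 / √(e : ℝ) else 0 := by
    intro e _
    have : |(moebius e : ℝ)| = if Squarefree e then 1 else 0 := by
      have := abs_moebius (n := e)
      have h2 : ((|moebius e| : ℤ) : ℝ) = ((if Squarefree e then 1 else 0 : ℤ) : ℝ) := by rw [this]
      push_cast at h2
      exact h2
    rw [this]
    split_ifs <;> simp
  rw [sum_congr rfl e2, h]
  refine sum_congr rfl fun t ht => ?_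
  have : t.val.prod = ∏ p ∈ t, p := by rw [Finset.prod_val]; rfl
  rw [this]
  push_cast
  rw [Real.sqrt_prod _ (fun i _ => by positivity)]
  simp

lemma wGY_pos (k : ℕ) : 0 < wGY k := prod_pos fun p _ => by positivity

lemma lemQ : ∀ k : ℕ, 1 ≤ k → ∃ α β : ℝ, ∀ x : ℝ, 0 < x →
    |hQ k x - α * Real.log x - β| ≤ 32 * wGY k / √x := by
  intro k hk
  obtain ⟨α, β, h⟩ := lemV (hm k) (hm_le k)
  refine ⟨∑ e ∈ k.divisors, (moebius e : ℝ) / e * α,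
    ∑ e ∈ k.divisors, (moebius e : ℝ) / e * (β - α * Real.log e), fun x hx => ?_⟩
  rw [hQ_eq k hk, sum_mul, ← sum_sub_distrib, ← sum_sub_distrib]
  refine (abs_sum_le_sum_abs _ _).trans ?_
  rw [← wGY_eq k hk, mul_sum, sum_div]
  refine sum_le_sum fun e he => ?_
  have he0 : 0 < e := Nat.pos_of_mem_divisors he
  have he1 : (0 : ℝ) < e := by exact_mod_cast he0
  have he2 : (1 : ℝ) ≤ e := by exact_mod_cast he0
  have h1 := h (x / e) ⌊x⌋₊ (by positivity)
    ((div_le_self hx.le he2).trans_lt (Nat.lt_floor_add_one x))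
  rw [Real.log_div hx.ne' he1.ne'] at h1
  have e1 : (moebius e : ℝ) / e * (∑ d ∈ Icc 1 ⌊x⌋₊, hm k d / (d : ℝ) ^ 2 * hT (x / e / (d : ℝ) ^ 2))
      - (moebius e : ℝ) / e * α * Real.log x - (moebius e : ℝ) / e * (β - α * Real.log e)
      = (moebius e : ℝ) / e * (∑ d ∈ Icc 1 ⌊x⌋₊, hm k d / (d : ℝ) ^ 2 * hT (x / e / (d : ℝ) ^ 2)
        - α * (Real.log x - Real.log e) - β) := by ring
  rw [e1, abs_mul, abs_div, abs_of_pos he1]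
  calc _ ≤ |(moebius e : ℝ)| / e * (32 / √(x / e)) := by gcongr
    _ = _ := by
      rw [Real.sqrt_div hx.le]
      have : 0 < √(e : ℝ) := Real.sqrt_pos.mpr he1
      have h2 : (e : ℝ) = √(e : ℝ) * √(e : ℝ) := (Real.mul_self_sqrt he1.le).symm
      have h3 : 0 < √x := Real.sqrt_pos.mpr hx
      nth_rewrite 1 [h2]
      field_simp

end

section
open Finset ArithmeticFunction

lemma totient_sqfree {a : ℕ} (ha : Squarefree a) :
    (a.totient : ℝ) = ∏ p ∈ a.primeFactors, ((p : ℝ) - 1) := by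
  have h := Nat.totient_mul_prod_primeFactors a
  rw [Nat.prod_primeFactors_of_squarefree ha, mul_comm] at h
  have h2 := Nat.eq_of_mul_eq_mul_left (Nat.pos_of_ne_zero ha.ne_zero) h
  rw [h2]
  push_cast
  refine prod_congr rfl fun p hp => ?_
  rw [Nat.cast_sub (Nat.prime_of_mem_primeFactors hp).one_le]; simp

lemma moebius_sq_real (a : ℕ) : (moebius a : ℝ) ^ 2 = if Squarefree a then 1 else 0 := by
  have := moebius_sq (n := a)
  have h2 : ((moebius a ^ 2 : ℤ) : ℝ) = ((if Squarefree a then 1 else 0 : ℤ) : ℝ) := by rw [this]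
  push_cast at h2
  exact h2

/-- Summability over squarefree integers of a product over primes. -/
lemma summable_sqfree_prod (r : ℕ → ℝ) (hr0 : ∀ p, 0 ≤ r p) (hr : Summable r) :
    Summable (fun a : ℕ => if Squarefree a then ∏ p ∈ a.primeFactors, r p else 0) := by
  have h1 := summable_finsetProd_of_summable_nonneg hr0 hr
  have hinj : Function.Injective (fun a : {a : ℕ // Squarefree a} => (a : ℕ).primeFactors) := by
    intro a b hab
    apply Subtype.ext
    rw [← Nat.prod_primeFactors_of_squarefree a.2, ← Nat.prod_primeFactors_of_squarefree b.2]
    exact prod_congr hab fun _ _ => rfl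
  have h2 := h1.comp_injective hinj
  have h3 := (summable_subtype_iff_indicator (s := {a : ℕ | Squarefree a})
    (f := fun a : ℕ => ∏ p ∈ a.primeFactors, r p)).mp h2
  refine h3.congr fun a => ?_
  simp [Set.indicator_apply]

noncomputable def hB (a : ℕ) : ℝ := (moebius a : ℝ) ^ 2 * wGY a / (√(a : ℝ) * a.totient)

lemma hB_summable : Summable hB := by
  set r : ℕ → ℝ := fun p => (1 + 1 / √(p : ℝ)) / (√(p : ℝ) * |(p : ℝ) - 1|) with hr
  have hr0 : ∀ p, 0 ≤ r p := fun p => by positivity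
  have hrs : Summable r := by
    refine Summable.of_nonneg_of_le hr0 (fun p => ?_) (summable_sqrt_div_sq.mul_left 4)
    rcases p with _ | _ | p
    · simp [hr]
    · simp [hr]
    · have h2 : (2 : ℝ) ≤ ((p + 2 : ℕ) : ℝ) := by push_cast; linarith [show (0:ℝ) ≤ p by positivity]
      simp only [hr]
      change (1 + 1 / √((p + 2 : ℕ) : ℝ)) / (√((p + 2 : ℕ) : ℝ) * |((p + 2 : ℕ) : ℝ) - 1|) ≤
        4 * (√((p + 2 : ℕ) : ℝ) / ((p + 2 : ℕ) : ℝ) ^ 2)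
      set P : ℝ := ((p + 2 : ℕ) : ℝ)
      have hs : 1 ≤ √P := by rw [Real.one_le_sqrt]; linarith
      have hP : P = √P * √P := (Real.mul_self_sqrt (by linarith)).symm
      rw [abs_of_nonneg (by linarith)]
      calc (1 + 1 / √P) / (√P * (P - 1)) ≤ (1 + 1) / (√P * (P / 2)) := by
            gcongr
            · rw [div_le_one (by positivity)]; exact hs
            · linarith
        _ = _ := by
            have : √P ≠ 0 := by positivity
            field_simp
            rw [pow_two, ← hP]; ring
  refine (summable_sqfree_prod r hr0 hrs).congr fun a => ?_
  unfold hB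
  rw [moebius_sq_real]
  split_ifs with ha
  · rw [totient_sqfree ha]
    have e : √(a : ℝ) = ∏ p ∈ a.primeFactors, √(p : ℝ) := by
      rw [← Real.sqrt_prod _ (fun i _ => by positivity)]
      rw [← Nat.cast_prod, Nat.prod_primeFactors_of_squarefree ha]
    rw [e, one_mul, wGY, ← prod_mul_distrib, ← prod_div_distrib]
    refine prod_congr rfl fun p hp => ?_
    have : (1 : ℝ) ≤ p := by exact_mod_cast (Nat.prime_of_mem_primeFactors hp).one_le
    simp only [hr]
    rw [abs_of_nonneg (by linarith)]
  · simp

noncomputable def hS (k : ℕ) (R : ℝ) : ℝ :=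
  ∑ n ∈ (Finset.Icc 1 ⌊R⌋₊).filter (fun n => Nat.gcd n k = 1),
          (ArithmeticFunction.moebius n : ℝ) ^ 2 / (n.totient : ℝ)

noncomputable def hc (k a : ℕ) : ℝ :=
  if Nat.gcd a k = 1 then (moebius a : ℝ) ^ 2 / (a * a.totient) else 0

lemma sum_inv_totient {n : ℕ} (hn : Squarefree n) :
    ∑ a ∈ n.divisors, 1 / (a.totient : ℝ) = n / n.totient := by
  have hn0 := hn.ne_zero
  have ht : (0 : ℝ) < n.totient := by exact_mod_cast Nat.totient_pos.mpr (Nat.pos_of_ne_zero hn0)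
  have h := Nat.sum_totient n
  rw [← Nat.sum_div_divisors] at h
  rw [eq_div_iff ht.ne', sum_mul]
  have h' : (n : ℝ) = ∑ d ∈ n.divisors, ((n / d).totient : ℝ) := by exact_mod_cast h.symm
  rw [h']
  refine sum_congr rfl fun d hd => ?_
  have hdn := Nat.dvd_of_mem_divisors hd
  have hd0 := Nat.pos_of_mem_divisors hd
  obtain ⟨m, rfl⟩ := hdn
  have hcop := Nat.coprime_of_squarefree_mul hn
  have : (0 : ℝ) < d.totient := by exact_mod_cast Nat.totient_pos.mpr hd0
  rw [Nat.mul_div_cancel_left _ hd0, Nat.totient_mul hcop]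
  push_cast
  field_simp

lemma char_mul (k a m : ℕ) :
    (if Nat.gcd (a * m) k = 1 then (moebius (a * m) : ℝ) ^ 2 else 0) =
    (if Nat.gcd a k = 1 then (moebius a : ℝ) ^ 2 else 0) *
      (if Nat.gcd m (a * k) = 1 then (moebius m : ℝ) ^ 2 else 0) := by
  have h1 : Nat.gcd (a * m) k = 1 ↔ Nat.gcd a k = 1 ∧ Nat.gcd m k = 1 := Nat.coprime_mul_iff_left
  have h2 : Nat.gcd m (a * k) = 1 ↔ Nat.gcd m a = 1 ∧ Nat.gcd m k = 1 := Nat.coprime_mul_iff_right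
  by_cases c1 : Nat.gcd a k = 1
  swap
  · simp [h1, c1]
  by_cases c2 : Nat.gcd m k = 1
  swap
  · simp [h1, h2, c2]
  by_cases c3 : Nat.gcd m a = 1
  · have : Nat.Coprime a m := Nat.Coprime.symm c3
    rw [isMultiplicative_moebius.map_mul_of_coprime this]
    push_cast
    simp [h1, h2, c1, c2, c3, mul_pow]
  · simp only [h1, h2, c1, c2, c3, and_self, if_true, false_and, if_false, mul_zero]
    rw [moebius_eq_zero_of_not_squarefree]
    · simp
    · intro hs
      exact c3 (Nat.Coprime.symm (Nat.coprime_of_squarefree_mul hs))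

lemma hS_eq (k : ℕ) (R : ℝ) :
    hS k R = ∑ a ∈ Icc 1 ⌊R⌋₊, hc k a * hQ (a * k) (R / a) := by
  have h1 : ∀ a ∈ Icc 1 ⌊R⌋₊, hc k a * hQ (a * k) (R / a) = ∑ n ∈ Icc 1 ⌊R⌋₊,
      if a ∣ n then (if Nat.gcd n k = 1 then (moebius n : ℝ) ^ 2 else 0) / n * (1 / a.totient)
      else 0 := by
    intro a ha
    have ha0 := (mem_Icc.mp ha).1
    have := sum_mult R a ha0 (fun n =>
      (if Nat.gcd n k = 1 then (moebius n : ℝ) ^ 2 else 0) / n * (1 / a.totient))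
    rw [← sum_filter, this]
    unfold hQ
    rw [sum_filter, mul_sum]
    refine sum_congr rfl fun m _ => ?_
    rw [char_mul]
    unfold hc
    push_cast
    split_ifs
    · field_simp
    · simp
    · simp
    · simp
  rw [sum_congr rfl h1, sum_comm]
  unfold hS
  rw [sum_filter]
  refine sum_congr rfl fun n hn => ?_
  rw [mem_Icc] at hn
  rw [← sum_filter, ← mul_sum]
  have e : (Icc 1 ⌊R⌋₊).filter (fun a => a ∣ n) = n.divisors := by
    ext d
    simp only [mem_filter, mem_Icc, Nat.mem_divisors]
    constructor
    · rintro ⟨_, h⟩; exact ⟨h, by omega⟩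
    · rintro ⟨h, _⟩
      exact ⟨⟨Nat.pos_of_dvd_of_pos h hn.1, (Nat.le_of_dvd hn.1 h).trans hn.2⟩, h⟩
  rw [e, moebius_sq_real]
  by_cases hs : Squarefree n
  · rw [sum_inv_totient hs]
    have : (n : ℝ) ≠ 0 := by have := hn.1; positivity
    split_ifs
    · field_simp
    · simp
  · simp [hs]

lemma wGY_mul (a k : ℕ) (h : Nat.gcd a k = 1) : wGY (a * k) = wGY a * wGY k := by
  unfold wGY
  rw [Nat.Coprime.primeFactors_mul h, prod_union]
  exact Nat.Coprime.disjoint_primeFactors h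

lemma coef_bound {α β W : ℝ} {G : ℝ → ℝ} (hG : ∀ x, x < 1 → G x = 0)
    (h : ∀ x : ℝ, 0 < x → |G x - α * Real.log x - β| ≤ W / √x) :
    |α| ≤ 8 * W ∧ |β| ≤ 8 * W := by
  have h1 := h (1 / 2 ^ 2) (by norm_num)
  have h2 := h (1 / 4 ^ 2) (by norm_num)
  rw [hG _ (by norm_num)] at h1 h2
  have e1 : √(1 / 2 ^ 2 : ℝ) = 1 / 2 := by
    rw [← one_div_pow]; exact Real.sqrt_sq (by norm_num)
  have e2 : √(1 / 4 ^ 2 : ℝ) = 1 / 4 := by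
    rw [← one_div_pow]; exact Real.sqrt_sq (by norm_num)
  have l1 : Real.log (1 / 2 ^ 2 : ℝ) = - (2 * Real.log 2) := by
    rw [one_div, Real.log_inv, Real.log_pow]; norm_num
  have l2 : Real.log (1 / 4 ^ 2 : ℝ) = - (4 * Real.log 2) := by
    rw [one_div, Real.log_inv, show (4 : ℝ) ^ 2 = 2 ^ 4 by norm_num, Real.log_pow]; norm_num
  rw [e1, l1, abs_le] at h1
  rw [e2, l2, abs_le] at h2
  have hl := Real.log_two_gt_d9
  have hl2 := Real.log_two_lt_d9
  rcases h1 with ⟨a1, a2⟩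
  rcases h2 with ⟨b1, b2⟩
  set L := Real.log 2
  have k1 : α * L ≤ 3 * W := by linarith
  have k2 : -(3 * W) ≤ α * L := by linarith
  have hW : 0 ≤ W := by linarith
  constructor
  · rw [abs_le]; constructor
    · by_contra hh; push Not at hh; nlinarith
    · by_contra hh; push Not at hh; nlinarith
  · rw [abs_le]; constructor <;> linarith

end

section
open Finset ArithmeticFunction

lemma hQ_zero (k : ℕ) (x : ℝ) (hx : x < 1) : hQ k x = 0 := by
  unfold hQ
  rw [Nat.floor_eq_zero.mpr hx]; simp

lemma hc_w (k a : ℕ) : |hc k a| * wGY (a * k) * √(a : ℝ) ≤ hB a * wGY k := by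
  rcases Nat.eq_zero_or_pos a with rfl | ha
  · simp [hB]
  have ha1 : (0 : ℝ) < a := by exact_mod_cast ha
  have ht : (0 : ℝ) < a.totient := by exact_mod_cast Nat.totient_pos.mpr ha
  unfold hc
  split_ifs with h
  · rw [wGY_mul a k h, abs_of_nonneg (by positivity)]
    unfold hB
    have h2 : (a : ℝ) = √(a : ℝ) * √(a : ℝ) := (Real.mul_self_sqrt ha1.le).symm
    have h3 : 0 < √(a : ℝ) := Real.sqrt_pos.mpr ha1
    nth_rewrite 1 [h2]
    apply le_of_eq
    field_simp
  · have := wGY_pos k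
    have := wGY_pos a
    simp only [abs_zero, zero_mul]
    unfold hB
    positivity

lemma lemS : ∃ A : ℝ, 0 < A ∧ ∀ k : ℕ, 1 ≤ k → ∃ α β : ℝ, ∀ R : ℝ, 0 < R →
    |hS k R - α * Real.log R - β| ≤ A * wGY k / √R := by
  choose! αf βf h using lemQ
  have hB0 : ∀ a, 0 ≤ hB a := fun a => by
    have := wGY_pos a
    unfold hB; positivity
  have hBt : 0 ≤ ∑' a, hB a := tsum_nonneg hB0
  refine ⟨32 * (∑' a, hB a) + 1, by linarith, fun k hk => ?_⟩
  have hw := wGY_pos k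
  have hcb : ∀ a, 1 ≤ a → |αf (a * k)| ≤ 8 * (32 * wGY (a * k)) ∧ |βf (a * k)| ≤ 8 * (32 * wGY (a * k)) :=
    fun a ha => coef_bound (hQ_zero (a * k)) (h (a * k) (Nat.mul_pos ha hk))
  have hc0 : hc k 0 = 0 := by simp [hc]
  have hone : ∀ a : ℕ, 1 ≤ a → 1 ≤ √(a : ℝ) := fun a ha => by
    rw [Real.one_le_sqrt]; exact_mod_cast ha
  have hcw' : ∀ a : ℕ, 1 ≤ a → |hc k a| * wGY (a * k) ≤ hB a * wGY k := fun a ha => by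
    refine le_trans ?_ (hc_w k a)
    have := wGY_pos (a * k)
    exact le_mul_of_one_le_right (by positivity) (hone a ha)
  have s1 : Summable (fun a => hc k a * αf (a * k)) := by
    refine Summable.of_norm_bounded ((hB_summable.mul_right (wGY k)).mul_left 256) fun a => ?_
    rcases Nat.eq_zero_or_pos a with rfl | ha
    · have := hB0 0
      rw [hc0, zero_mul, norm_zero]; positivity
    rw [norm_mul, Real.norm_eq_abs, Real.norm_eq_abs]
    calc _ ≤ |hc k a| * (8 * (32 * wGY (a * k))) := by gcongr; exact (hcb a ha).1
      _ = 256 * (|hc k a| * wGY (a * k)) := by ring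
      _ ≤ _ := mul_le_mul_of_nonneg_left (hcw' a ha) (by norm_num)
  have s2 : Summable (fun a => hc k a * βf (a * k)) := by
    refine Summable.of_norm_bounded ((hB_summable.mul_right (wGY k)).mul_left 256) fun a => ?_
    rcases Nat.eq_zero_or_pos a with rfl | ha
    · have := hB0 0
      rw [hc0, zero_mul, norm_zero]; positivity
    rw [norm_mul, Real.norm_eq_abs, Real.norm_eq_abs]
    calc _ ≤ |hc k a| * (8 * (32 * wGY (a * k))) := by gcongr; exact (hcb a ha).2
      _ = 256 * (|hc k a| * wGY (a * k)) := by ring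
      _ ≤ _ := mul_le_mul_of_nonneg_left (hcw' a ha) (by norm_num)
  have s3 : Summable (fun a : ℕ => hc k a * αf (a * k) * Real.log a) := by
    refine Summable.of_norm_bounded ((hB_summable.mul_right (wGY k)).mul_left 512) fun a => ?_
    rcases Nat.eq_zero_or_pos a with rfl | ha
    · have := hB0 0
      rw [hc0, zero_mul, zero_mul, norm_zero]; positivity
    rw [norm_mul, norm_mul, Real.norm_eq_abs, Real.norm_eq_abs, Real.norm_eq_abs,
      abs_of_nonneg (Real.log_natCast_nonneg a)]
    have := wGY_pos (a * k)
    calc _ ≤ |hc k a| * (8 * (32 * wGY (a * k))) * (2 * √(a : ℝ)) := by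
          gcongr
          · exact (hcb a ha).1
          · exact log_le_two_sqrt (by positivity)
      _ = 512 * (|hc k a| * wGY (a * k) * √(a : ℝ)) := by ring
      _ ≤ _ := mul_le_mul_of_nonneg_left (hc_w k a) (by norm_num)
  refine ⟨∑' a, hc k a * αf (a * k),
    (∑' a, hc k a * βf (a * k)) - ∑' a : ℕ, hc k a * αf (a * k) * Real.log a, fun R hR => ?_⟩
  have hSum : HasSum (fun a : ℕ => hc k a * hQ (a * k) (R / a)) (hS k R) := by
    rw [hS_eq]
    refine hasSum_sum_of_ne_finset_zero fun a ha => ?_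
    rcases Nat.eq_zero_or_pos a with rfl | ha0
    · rw [hc0, zero_mul]
    have h1 : ⌊R⌋₊ < a := by
      by_contra hh; exact ha (mem_Icc.mpr ⟨ha0, by omega⟩)
    rw [Nat.floor_lt hR.le] at h1
    rw [hQ_zero, mul_zero]
    rw [div_lt_one (by linarith)]; exact h1
  have hH := (hSum.sub (s1.hasSum.mul_right (Real.log R))).sub (s2.hasSum.sub s3.hasSum)
  have hbd := tsum_of_norm_bounded (f := fun a : ℕ => hc k a * hQ (a * k) (R / a)
      - hc k a * αf (a * k) * Real.log R - (hc k a * βf (a * k) - hc k a * αf (a * k) * Real.log a))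
    ((hB_summable.mul_left (32 * wGY k / √R)).hasSum) (fun a => ?_)
  · rw [hH.tsum_eq, Real.norm_eq_abs, tsum_mul_left] at hbd
    refine hbd.trans ?_
    have hsq : 0 < √R := Real.sqrt_pos.mpr hR
    rw [div_mul_eq_mul_div]
    refine div_le_div_of_nonneg_right ?_ hsq.le
    nlinarith
  · rcases Nat.eq_zero_or_pos a with rfl | ha
    · have := hB0 0
      simp only [hc0, zero_mul, sub_zero, norm_zero]; positivity
    have ha1 : (0 : ℝ) < a := by exact_mod_cast ha
    have h1 := h (a * k) (Nat.mul_pos ha hk) (R / a) (by positivity)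
    rw [Real.log_div hR.ne' ha1.ne'] at h1
    have e : hc k a * hQ (a * k) (R / a)
      - hc k a * αf (a * k) * Real.log R - (hc k a * βf (a * k) - hc k a * αf (a * k) * Real.log a)
      = hc k a * (hQ (a * k) (R / a) - αf (a * k) * (Real.log R - Real.log a) - βf (a * k)) := by
      ring
    rw [e, norm_mul, Real.norm_eq_abs, Real.norm_eq_abs]
    have hsq : 0 < √R := Real.sqrt_pos.mpr hR
    calc _ ≤ |hc k a| * (32 * wGY (a * k) / √(R / a)) := by gcongr
      _ = 32 * (|hc k a| * wGY (a * k) * √(a : ℝ)) / √R := by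
          rw [Real.sqrt_div hR.le]; field_simp
      _ ≤ 32 * (hB a * wGY k) / √R :=
          div_le_div_of_nonneg_right (mul_le_mul_of_nonneg_left (hc_w k a) (by norm_num)) hsq.le
      _ = _ := by ring

end

section
open Finset ArithmeticFunction Filter Topology

lemma asym_unique {f : ℝ → ℝ} {a b a' b' : ℝ}
    (h : Tendsto (fun R => f R - a * Real.log R) atTop (𝓝 b))
    (h' : Tendsto (fun R => f R - a' * Real.log R) atTop (𝓝 b')) : a = a' ∧ b = b' := by
  have h1 := h.sub h'
  have h2 := h1.div_atTop Real.tendsto_log_atTop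
  have h3 : Tendsto (fun _ : ℝ => a' - a) atTop (𝓝 0) := by
    refine h2.congr' ?_
    filter_upwards [eventually_gt_atTop 1] with R hR
    have := Real.log_pos hR
    field_simp
    ring
  have h4 := tendsto_nhds_unique h3 tendsto_const_nhds
  have h5 : a = a' := by linarith
  subst h5
  exact ⟨rfl, tendsto_nhds_unique h h'⟩

lemma asym_of_bound {f : ℝ → ℝ} {a b C : ℝ}
    (h : ∀ R : ℝ, 0 < R → |f R - a * Real.log R - b| ≤ C / √R) :
    Tendsto (fun R => f R - a * Real.log R) atTop (𝓝 b) := by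
  rw [tendsto_iff_norm_sub_tendsto_zero]
  have h1 : Tendsto (fun R : ℝ => C / √R) atTop (𝓝 0) :=
    tendsto_const_nhds.div_atTop Real.tendsto_sqrt_atTop
  refine squeeze_zero' (Eventually.of_forall fun _ => norm_nonneg _) ?_ h1
  filter_upwards [eventually_gt_atTop 0] with R hR
  exact h R hR

lemma hS_dvd {p k : ℕ} (hpk : p ∣ k) (R : ℝ) :
    hS (p * k) R = hS k R := by
  unfold hS
  congr 1
  refine filter_congr fun n _ => ?_
  have h2 : Nat.gcd n (p * k) = 1 ↔ Nat.gcd n p = 1 ∧ Nat.gcd n k = 1 := Nat.coprime_mul_iff_right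
  rw [h2]
  exact ⟨fun h => h.2, fun h => ⟨Nat.Coprime.coprime_dvd_right hpk h, h⟩⟩

lemma hS_rel {p k : ℕ} (hpk : ¬ p ∣ k) (hp : p.Prime) (R : ℝ) :
    hS k R = hS (p * k) R + 1 / ((p : ℝ) - 1) * hS (p * k) (R / p) := by
  have hcop : Nat.gcd p k = 1 := (Nat.Prime.coprime_iff_not_dvd hp).mpr hpk
  have hsum := sum_mult R p hp.one_le (fun n =>
      (if Nat.gcd n k = 1 then (moebius n : ℝ) ^ 2 else 0) / (n.totient : ℝ))
  have e1 : hS k R = ∑ n ∈ Icc 1 ⌊R⌋₊,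
      (if Nat.gcd n k = 1 then (moebius n : ℝ) ^ 2 else 0) / (n.totient : ℝ) := by
    unfold hS
    rw [sum_filter]
    refine sum_congr rfl fun n _ => ?_
    split_ifs <;> simp
  have e2 : hS (p * k) R = ∑ n ∈ (Icc 1 ⌊R⌋₊).filter (fun n => ¬ p ∣ n),
      (if Nat.gcd n k = 1 then (moebius n : ℝ) ^ 2 else 0) / (n.totient : ℝ) := by
    unfold hS
    rw [sum_filter, sum_filter]
    refine sum_congr rfl fun n _ => ?_
    have h2 : Nat.gcd n (p * k) = 1 ↔ Nat.gcd n p = 1 ∧ Nat.gcd n k = 1 :=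
      Nat.coprime_mul_iff_right
    have h3 : Nat.gcd n p = 1 ↔ ¬ p ∣ n := by
      rw [Nat.gcd_comm]; exact Nat.Prime.coprime_iff_not_dvd hp
    simp only [h2, h3]
    by_cases a1 : p ∣ n <;> by_cases a2 : Nat.gcd n k = 1 <;> simp [a1, a2]
  rw [e1, ← sum_filter_add_sum_filter_not _ (fun n => p ∣ n), ← e2, hsum, add_comm]
  congr 1
  unfold hS
  rw [sum_filter, mul_sum]
  refine sum_congr rfl fun m _ => ?_
  rw [char_mul, if_pos hcop]
  split_ifs with h
  · have h2 : Nat.Coprime p m := (Nat.Coprime.coprime_dvd_right (dvd_mul_right p k) h).symm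
    rw [Nat.totient_mul h2, Nat.totient_prime hp, moebius_apply_prime hp]
    push_cast [Nat.cast_sub hp.one_le]
    rw [div_mul_div_comm]
    norm_num
  · simp

lemma final_step (hbase : Tendsto (fun R => hS 1 R - 1 * Real.log R) atTop (𝓝 cGY)) :
    ∀ k : ℕ, 1 ≤ k → Tendsto (fun R => hS k R - ((k.totient : ℝ) / k) * Real.log R) atTop
      (𝓝 (((k.totient : ℝ) / k) * (cGY + vGY k))) := by
  obtain ⟨A, hA, hAS⟩ := lemS
  intro k
  induction k using induction_on_primes with
  | zero => intro h; omega
  | one => intro _; simpa [vGY] using hbase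
  | prime_mul p k hp ih =>
    intro hk
    have hk1 : 1 ≤ k := by
      rcases Nat.eq_zero_or_pos k with rfl | h
      · simp at hk
      · exact h
    have ih := ih hk1
    have hk0 : (0 : ℝ) < k := by exact_mod_cast hk1
    have hp0 : (0 : ℝ) < p := by exact_mod_cast hp.pos
    have hp1 : (0 : ℝ) < (p : ℝ) - 1 := by
      have : (1 : ℝ) < p := by exact_mod_cast hp.one_lt
      linarith
    by_cases hpk : p ∣ k
    · have e1 : (((p * k).totient : ℕ) : ℝ) / ((p * k : ℕ) : ℝ) = (k.totient : ℝ) / k := by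
        rw [Nat.totient_mul_of_prime_of_dvd hp hpk]; push_cast; field_simp
      have e2 : vGY (p * k) = vGY k := by
        unfold vGY
        rw [Nat.primeFactors_mul hp.ne_zero (by omega), hp.primeFactors]
        congr 1
        rw [union_eq_right, singleton_subset_iff]
        exact Nat.mem_primeFactors.mpr ⟨hp, hpk, by omega⟩
      rw [e1, e2]
      simpa only [hS_dvd hpk] using ih
    · have hcop : Nat.Coprime p k := (Nat.Prime.coprime_iff_not_dvd hp).mpr hpk
      obtain ⟨α, β, hab⟩ := hAS (p * k) hk
      have h1 := asym_of_bound hab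
      have h2 : Tendsto (fun R : ℝ => hS (p * k) (R / p) - α * Real.log (R / p)) atTop (𝓝 β) :=
        h1.comp (tendsto_id.atTop_div_const hp0)
      have h3 := h1.add (h2.const_mul (1 / ((p : ℝ) - 1)))
      have h4 : Tendsto (fun R : ℝ => hS k R - (α * (p / (p - 1))) * Real.log R) atTop
          (𝓝 (β + 1 / ((p : ℝ) - 1) * β - 1 / ((p : ℝ) - 1) * (α * Real.log p))) := by
        refine (h3.sub_const _).congr' ?_
        filter_upwards [eventually_gt_atTop 0] with R hR
        rw [hS_rel hpk hp R, Real.log_div hR.ne' hp0.ne']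
        field_simp
        ring
      obtain ⟨u1, u2⟩ := asym_unique h4 ih
      have ea : α = (((p * k).totient : ℕ) : ℝ) / ((p * k : ℕ) : ℝ) := by
        rw [Nat.totient_mul hcop, Nat.totient_prime hp]
        push_cast [Nat.cast_sub hp.one_le]
        have : α = (k.totient : ℝ) / k * ((p - 1) / p) := by rw [← u1]; field_simp
        rw [this]; field_simp
      have ev : vGY (p * k) = Real.log p / p + vGY k := by
        unfold vGY
        rw [Nat.Coprime.primeFactors_mul hcop, sum_union hcop.disjoint_primeFactors,
          hp.primeFactors, sum_singleton]
      have eb : β = α * (cGY + vGY (p * k)) := by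
        rw [ev]
        rw [← u1] at u2
        field_simp at u2 ⊢
        linear_combination u2
      rw [← ea, ← eb]
      exact h1

lemma final (hbase : Tendsto (fun R => hS 1 R - 1 * Real.log R) atTop (𝓝 cGY)) :
    ∃ A : ℝ, 0 < A ∧ ∀ (k : ℕ) (R : ℝ), 1 ≤ k → 1 ≤ R →
      |hS k R
        - ((k.totient : ℝ) / (k : ℝ)) * (Real.log R + cGY + vGY k)|
      ≤ A * wGY k / Real.sqrt R := by
  obtain ⟨A, hA, hAS⟩ := lemS
  refine ⟨A, hA, fun k R hk hR => ?_⟩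
  obtain ⟨α, β, hab⟩ := hAS k hk
  obtain ⟨u1, u2⟩ := asym_unique (asym_of_bound hab) (final_step hbase k hk)
  have := hab R (by linarith)
  rw [u1, u2] at this
  convert this using 2
  ring

end

section
open Finset ArithmeticFunction Filter Topology

lemma pow_diff_bound {s : ℝ} (hs : 0 < s) (m : ℕ) (hm : 1 ≤ m) :
    0 ≤ (m : ℝ) ^ (-s) - ((m + 1 : ℕ) : ℝ) ^ (-s) ∧
    (m : ℝ) ^ (-s) - ((m + 1 : ℕ) : ℝ) ^ (-s) ≤ s / m := by
  have hm0 : (0 : ℝ) < m := by exact_mod_cast hm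
  have hm1 : (1 : ℝ) ≤ m := by exact_mod_cast hm
  push_cast
  constructor
  · rw [sub_nonneg]
    exact Real.rpow_le_rpow_of_nonpos hm0 (by linarith) (by linarith)
  · have e1 : ((m : ℝ) + 1) ^ (-s) = (m : ℝ) ^ (-s) * Real.exp (-(s * Real.log ((m + 1) / m))) := by
      rw [Real.rpow_def_of_pos hm0, Real.rpow_def_of_pos (by linarith), ← Real.exp_add,
        Real.log_div (by linarith) hm0.ne']
      congr 1; ring
    have h1 : (m : ℝ) ^ (-s) ≤ 1 := Real.rpow_le_one_of_one_le_of_nonpos hm1 (by linarith)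
    have h0 : 0 ≤ (m : ℝ) ^ (-s) := by positivity
    have h2 := Real.add_one_le_exp (-(s * Real.log (((m : ℝ) + 1) / m)))
    have h3 : Real.log (((m : ℝ) + 1) / m) ≤ ((m : ℝ) + 1) / m - 1 :=
      Real.log_le_sub_one_of_pos (by positivity)
    have h5 : 0 ≤ Real.log (((m : ℝ) + 1) / m) :=
      Real.log_nonneg (by rw [le_div_iff₀ hm0]; linarith)
    have h4 : ((m : ℝ) + 1) / m - 1 = 1 / m := by field_simp; ring
    rw [e1]
    calc (m : ℝ) ^ (-s) - (m : ℝ) ^ (-s) * Real.exp (-(s * Real.log ((m + 1) / m)))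
        = (m : ℝ) ^ (-s) * (1 - Real.exp (-(s * Real.log ((m + 1) / m)))) := by ring
      _ ≤ (m : ℝ) ^ (-s) * (s * Real.log ((m + 1) / m)) := by gcongr; linarith
      _ ≤ 1 * (s * (1 / m)) := by gcongr; linarith
      _ = s / m := by ring

lemma abel_parts (u h : ℕ → ℝ) (L : ℝ) (h1 : h 1 = 1) (M : ℕ) :
    ∑ n ∈ range (M + 1), u (n + 1) * h (n + 1) - L =
      (∑ j ∈ range (M + 1), u (j + 1) - L) * h (M + 1) +
      ∑ n ∈ range M, (∑ j ∈ range (n + 1), u (j + 1) - L) * (h (n + 1) - h (n + 2)) := by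
  induction M with
  | zero => simp [h1]
  | succ M ih =>
    rw [sum_range_succ (fun n => u (n + 1) * h (n + 1)) (M + 1), add_sub_right_comm, ih,
      sum_range_succ (fun n => (∑ j ∈ range (n + 1), u (j + 1) - L) * (h (n + 1) - h (n + 2))) M,
      sum_range_succ (fun j => u (j + 1)) (M + 1)]
    ring

lemma abel_bound (u : ℕ → ℝ) (L C : ℝ)
    (hU : ∀ N : ℕ, |∑ j ∈ range (N + 1), u (j + 1) - L| ≤ C / √((N + 1 : ℕ) : ℝ)) (s D : ℝ)
    (hs : 0 < s) (hD : HasSum (fun n : ℕ => u n * (n : ℝ) ^ (-s)) D) :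
    |D - L| ≤ s * (C * ∑' d : ℕ, √(d : ℝ) / (d : ℝ) ^ 2) := by
  have hC : 0 ≤ C := by
    have := (abs_nonneg _).trans (hU 0)
    simpa using this
  have e0 : u 0 * ((0 : ℕ) : ℝ) ^ (-s) = 0 := by
    rw [Nat.cast_zero, Real.zero_rpow (by linarith), mul_zero]
  have hD1 : Tendsto (fun M : ℕ => ∑ n ∈ range (M + 1), u (n + 1) * ((n + 1 : ℕ) : ℝ) ^ (-s))
      atTop (𝓝 D) := by
    have := (hD.tendsto_sum_nat.comp (tendsto_add_atTop_nat 2))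
    refine this.congr fun M => ?_
    simp only [Function.comp]
    rw [sum_range_succ', e0, add_zero]
  have ht : Tendsto (fun M : ℕ => C / √((M + 1 : ℕ) : ℝ) +
      s * (C * ∑' d : ℕ, √(d : ℝ) / (d : ℝ) ^ 2)) atTop
      (𝓝 (0 + s * (C * ∑' d : ℕ, √(d : ℝ) / (d : ℝ) ^ 2))) := by
    refine Tendsto.add_const _ ?_
    refine tendsto_const_nhds.div_atTop ?_
    exact Real.tendsto_sqrt_atTop.comp
      (tendsto_natCast_atTop_atTop.comp (tendsto_add_atTop_nat 1))
  rw [zero_add] at ht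
  refine le_of_tendsto_of_tendsto' ((hD1.sub_const L).abs) ht fun M => ?_
  rw [abel_parts u (fun n => (n : ℝ) ^ (-s)) L (by simp) M]
  refine (abs_add_le _ _).trans (add_le_add ?_ ?_)
  · rw [abs_mul]
    have hp : |((M + 1 : ℕ) : ℝ) ^ (-s)| ≤ 1 := by
      rw [abs_of_nonneg (by positivity)]
      refine Real.rpow_le_one_of_one_le_of_nonpos ?_ (by linarith)
      push_cast; linarith [show (0:ℝ) ≤ M by positivity]
    calc _ ≤ C / √((M + 1 : ℕ) : ℝ) * 1 := by
          refine mul_le_mul (hU M) hp (abs_nonneg _) (by positivity)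
      _ = _ := mul_one _
  · refine (abs_sum_le_sum_abs _ _).trans ?_
    have key : ∀ n ∈ range M, |(∑ j ∈ range (n + 1), u (j + 1) - L) *
        (((n + 1 : ℕ) : ℝ) ^ (-s) - ((n + 2 : ℕ) : ℝ) ^ (-s))| ≤
        s * (C * (√((n + 1 : ℕ) : ℝ) / ((n + 1 : ℕ) : ℝ) ^ 2)) := by
      intro n _
      obtain ⟨p1, p2⟩ := pow_diff_bound hs (n + 1) (by omega)
      rw [abs_mul, abs_of_nonneg p1]
      calc _ ≤ C / √((n + 1 : ℕ) : ℝ) * (s / ((n + 1 : ℕ) : ℝ)) :=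
            mul_le_mul (hU n) p2 p1 (by positivity)
        _ = _ := by
          have hx : (0 : ℝ) < ((n + 1 : ℕ) : ℝ) := by positivity
          have h2 := Real.mul_self_sqrt hx.le
          have h3 : 0 < √((n + 1 : ℕ) : ℝ) := Real.sqrt_pos.mpr hx
          generalize ((n + 1 : ℕ) : ℝ) = x at *
          field_simp
          nlinarith
    refine (sum_le_sum key).trans ?_
    rw [← mul_sum, ← mul_sum]
    have h5 : ∑ n ∈ range M, √((n + 1 : ℕ) : ℝ) / ((n + 1 : ℕ) : ℝ) ^ 2 ≤
        ∑' d : ℕ, √(d : ℝ) / (d : ℝ) ^ 2 := by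
      have h6 := summable_sqrt_div_sq.sum_le_tsum (range (M + 1)) (fun i _ => by positivity)
      rw [sum_range_succ'] at h6
      simpa using h6
    exact mul_le_mul_of_nonneg_left (mul_le_mul_of_nonneg_left h5 hC) hs.le

noncomputable def hF (s : ℝ) (n : ℕ) : ℝ := (moebius n : ℝ) ^ 2 / (n.totient : ℝ) * (n : ℝ) ^ (-s)

lemma hF_summable {s : ℝ} (hs : 0 < s) : Summable (hF s) := by
  set r : ℕ → ℝ := fun p => (p : ℝ) ^ (-s) / |(p : ℝ) - 1| with hr
  have hr0 : ∀ p, 0 ≤ r p := fun p => by positivity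
  have hrs : Summable r := by
    have hz : Summable (fun n : ℕ => (n : ℝ) ^ (-(1 + s))) :=
      Real.summable_nat_rpow.mpr (by linarith)
    refine Summable.of_nonneg_of_le hr0 (fun p => ?_) (hz.mul_left 2)
    rcases p with _ | _ | p
    · simp only [hr]
      rw [Nat.cast_zero, Real.zero_rpow (by linarith), Real.zero_rpow (by linarith)]; simp
    · simp [hr]
    · have h2 : (2 : ℝ) ≤ ((p + 2 : ℕ) : ℝ) := by push_cast; linarith [show (0:ℝ) ≤ p by positivity]
      simp only [hr]
      change ((p + 2 : ℕ) : ℝ) ^ (-s) / |((p + 2 : ℕ) : ℝ) - 1| ≤ 2 * ((p + 2 : ℕ) : ℝ) ^ (-(1 + s))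
      set P : ℝ := ((p + 2 : ℕ) : ℝ)
      rw [abs_of_nonneg (by linarith), neg_add, Real.rpow_add (by linarith), Real.rpow_neg_one]
      calc P ^ (-s) / (P - 1) ≤ P ^ (-s) / (P / 2) := by
            gcongr
            linarith
        _ = _ := by field_simp
  refine (summable_sqfree_prod r hr0 hrs).congr fun a => ?_
  unfold hF
  rw [moebius_sq_real]
  split_ifs with ha
  · rw [totient_sqfree ha]
    have e : (a : ℝ) ^ (-s) = ∏ p ∈ a.primeFactors, (p : ℝ) ^ (-s) := by
      rw [Real.finsetProd_rpow _ _ (fun i _ => by positivity)]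
      rw [← Nat.cast_prod, Nat.prod_primeFactors_of_squarefree ha]
    rw [e, one_div, inv_mul_eq_div, ← prod_div_distrib]
    refine prod_congr rfl fun p hp => ?_
    have : (1 : ℝ) ≤ p := by exact_mod_cast (Nat.prime_of_mem_primeFactors hp).one_le
    simp only [hr]
    rw [abs_of_nonneg (by linarith)]
  · simp

lemma hF_prod {s : ℝ} (hs : 0 < s) :
    HasProd (fun p : Nat.Primes => 1 + ((p : ℕ) : ℝ) ^ (-s) / (((p : ℕ) : ℝ) - 1)) (∑' n, hF s n) := by
  have h := EulerProduct.eulerProduct_hasProd (f := hF s) (by simp [hF]) ?_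
    (by simpa using (hF_summable hs).norm) (by simp [hF])
  · have e : (fun p : Nat.Primes => 1 + ((p : ℕ) : ℝ) ^ (-s) / (((p : ℕ) : ℝ) - 1)) =
        fun p : Nat.Primes => ∑' e, hF s ((p : ℕ) ^ e) := by
      funext p
      rw [tsum_eq_sum (s := range 2)]
      · rw [sum_range_succ, sum_range_succ]
        simp only [range_zero, sum_empty, pow_zero, pow_one, zero_add]
        unfold hF
        rw [Nat.totient_prime p.2, moebius_apply_prime p.2, Nat.cast_sub p.2.one_le]
        simp
        ring
      · intro e he
        rw [mem_range] at he
        unfold hF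
        rw [moebius_apply_prime_pow p.2 (by omega), if_neg (by omega)]
        simp
    rw [e]
    exact h
  · intro m n hmn
    unfold hF
    rw [isMultiplicative_moebius.map_mul_of_coprime hmn, Nat.totient_mul hmn]
    push_cast
    rw [Real.mul_rpow (by positivity) (by positivity)]
    ring

noncomputable def hZ (s : ℝ) (n : ℕ) : ℝ := (n : ℝ) ^ (-(1 + s))

lemma hZ_summable {s : ℝ} (hs : 0 < s) : Summable (hZ s) :=
  Real.summable_nat_rpow.mpr (by linarith)

lemma hZ_prod {s : ℝ} (hs : 0 < s) :
    HasProd (fun p : Nat.Primes => (1 - ((p : ℕ) : ℝ) ^ (-(1 + s)))⁻¹) (∑' n, hZ s n) := by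
  let f : ℕ →*₀ ℝ :=
    { toFun := hZ s
      map_zero' := by simp only [hZ]; rw [Nat.cast_zero, Real.zero_rpow (by linarith)]
      map_one' := by simp [hZ]
      map_mul' := fun a b => by
        simp only [hZ]; push_cast
        rw [Real.mul_rpow (by positivity) (by positivity)] }
  have := EulerProduct.eulerProduct_completely_multiplicative_hasProd (f := f)
    ((hZ_summable hs).norm)
  exact this

lemma hZ_limit : Tendsto (fun s : ℝ => (∑' n, hZ s n) - 1 / s) (𝓝[>] 0)
    (𝓝 Real.eulerMascheroniConstant) := by
  have h := ZetaAsymptotics.tendsto_riemannZeta_sub_one_div_nhds_right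
  have hmap : Tendsto (fun s : ℝ => 1 + s) (𝓝[>] 0) (𝓝[>] 1) := by
    refine tendsto_nhdsWithin_iff.mpr ⟨?_, ?_⟩
    · have : Tendsto (fun s : ℝ => 1 + s) (𝓝 0) (𝓝 (1 + 0)) := by
        exact (continuous_const.add continuous_id).tendsto 0
      rw [add_zero] at this
      exact this.mono_left nhdsWithin_le_nhds
    · filter_upwards [self_mem_nhdsWithin] with s hs
      have : (0 : ℝ) < s := hs
      simp [this]
  have h2 := (Complex.continuous_re.tendsto _).comp (h.comp hmap)
  simp only [Complex.ofReal_re] at h2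
  refine h2.congr' ?_
  filter_upwards [self_mem_nhdsWithin] with s hs
  have hs : (0 : ℝ) < s := hs
  simp only [Function.comp]
  rw [zeta_eq_tsum_one_div_nat_cpow (by simp [hs])]
  have e : ∀ n : ℕ, (1 : ℂ) / (n : ℂ) ^ ((1 + s : ℝ) : ℂ) = ((hZ s n : ℝ) : ℂ) := by
    intro n
    unfold hZ
    rw [Real.rpow_neg (by positivity), Complex.ofReal_inv, Complex.ofReal_cpow (by positivity)]
    simp
  simp_rw [e]
  rw [← Complex.ofReal_tsum]
  have e2 : (1 : ℂ) / (((1 + s : ℝ) : ℂ) - 1) = ((1 / s : ℝ) : ℂ) := by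
    push_cast; congr 1; ring
  rw [e2, ← Complex.ofReal_sub, Complex.ofReal_re]

noncomputable def hEps (s : ℝ) (p : Nat.Primes) : ℝ :=
  ((p : ℕ) : ℝ) ^ (-s) * (1 - ((p : ℕ) : ℝ) ^ (-s)) / (((p : ℕ) : ℝ) * (((p : ℕ) : ℝ) - 1))

noncomputable def hEll (p : Nat.Primes) : ℝ :=
  Real.log (p : ℕ) / (((p : ℕ) : ℝ) * (((p : ℕ) : ℝ) - 1))

lemma prime_two_le (p : Nat.Primes) : (2 : ℝ) ≤ ((p : ℕ) : ℝ) := by exact_mod_cast p.2.two_le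

lemma hEll_summable : Summable hEll := by
  have h := (summable_sqrt_div_sq.mul_left 4).comp_injective Nat.Primes.coe_nat_injective
  refine Summable.of_nonneg_of_le (fun p => ?_) (fun p => ?_) h
  · have := prime_two_le p
    have : 0 ≤ Real.log (p : ℕ) := Real.log_natCast_nonneg _
    have : (0 : ℝ) ≤ ((p : ℕ) : ℝ) - 1 := by linarith
    unfold hEll; positivity
  · have h2 := prime_two_le p
    simp only [Function.comp]
    unfold hEll
    calc _ ≤ (2 * √((p : ℕ) : ℝ)) / (((p : ℕ) : ℝ) * (((p : ℕ) : ℝ) / 2)) := by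
          gcongr
          · exact log_le_two_sqrt (by positivity)
          · linarith
      _ = _ := by field_simp; norm_num

lemma hEps_bounds {s : ℝ} (hs : 0 < s) (p : Nat.Primes) :
    0 ≤ hEps s p ∧ hEps s p ≤ s * hEll p := by
  have h2 := prime_two_le p
  unfold hEps hEll
  set P : ℝ := ((p : ℕ) : ℝ)
  have hP1 : 0 < P - 1 := by linarith
  have hx0 : 0 ≤ P ^ (-s) := by positivity
  have hx1 : P ^ (-s) ≤ 1 := Real.rpow_le_one_of_one_le_of_nonpos (by linarith) (by linarith)
  have hx2 : 1 - P ^ (-s) ≤ s * Real.log P := by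
    rw [Real.rpow_def_of_pos (by linarith)]
    have := Real.add_one_le_exp (Real.log P * -s)
    linarith
  constructor
  · have : 0 ≤ 1 - P ^ (-s) := by linarith
    positivity
  · rw [← mul_div_assoc]
    refine div_le_div_of_nonneg_right ?_ (by positivity)
    have h9 : P ^ (-s) * (1 - P ^ (-s)) ≤ 1 * (1 - P ^ (-s)) :=
      mul_le_mul_of_nonneg_right hx1 (by linarith)
    linarith

lemma hEps_summable {s : ℝ} (hs : 0 < s) : Summable (hEps s) :=
  Summable.of_nonneg_of_le (fun p => (hEps_bounds hs p).1) (fun p => (hEps_bounds hs p).2)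
    (hEll_summable.mul_left s)

lemma one_add_sum_le_prod' {ι : Type*} [DecidableEq ι] (t : Finset ι) (f : ι → ℝ)
    (hf : ∀ i, 0 ≤ f i) : 1 + ∑ i ∈ t, f i ≤ ∏ i ∈ t, (1 + f i) := by
  induction t using Finset.induction_on with
  | empty => simp
  | insert a t ha ih =>
    rw [sum_insert ha, prod_insert ha]
    have h1 := hf a
    have h2 : 0 ≤ ∑ i ∈ t, f i := sum_nonneg fun i _ => hf i
    nlinarith

lemma hP_exists {s : ℝ} (hs : 0 < s) : ∃ P : ℝ, (∑' n, hF s n) = (∑' n, hZ s n) * P ∧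
    1 + ∑' p, hEps s p ≤ P ∧ P ≤ Real.exp (s * ∑' p, hEll p) := by
  classical
  have hm := Real.multipliable_one_add_of_summable (hEps_summable hs)
  refine ⟨∏' p, (1 + hEps s p), ?_, ?_, ?_⟩
  · have h := (hZ_prod hs).mul hm.hasProd
    refine HasProd.unique (hF_prod hs) ?_
    convert h using 2 with p
    have h2 := prime_two_le p
    unfold hEps
    set P : ℝ := ((p : ℕ) : ℝ)
    have hP1 : 0 < P - 1 := by linarith
    have hP0 : 0 < P := by linarith
    have hx0 : 0 < P ^ (-s) := by positivity
    have hx1 : P ^ (-s) ≤ 1 := Real.rpow_le_one_of_one_le_of_nonpos (by linarith) (by linarith)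
    rw [neg_add, Real.rpow_add hP0, Real.rpow_neg_one]
    set X := P ^ (-s)
    have h3 : 1 - P⁻¹ * X = (P - X) / P := by field_simp
    have h4 : P - X ≠ 0 := by linarith
    rw [h3]
    field_simp
    ring
  · exact le_of_tendsto_of_tendsto' ((hEps_summable hs).hasSum.const_add 1) hm.hasProd
      (fun t => one_add_sum_le_prod' t _ (fun p => (hEps_bounds hs p).1))
  · refine le_of_tendsto' hm.hasProd fun t => ?_
    refine (Real.prod_one_add_le_exp_sum t (fun p => (hEps_bounds hs p).1)).trans ?_
    rw [Real.exp_le_exp]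
    refine ((hEps_summable hs).sum_le_tsum t (fun p _ => (hEps_bounds hs p).1)).trans ?_
    rw [← tsum_mul_left]
    exact (hEps_summable hs).tsum_le_tsum (fun p => (hEps_bounds hs p).2) (hEll_summable.mul_left s)

lemma hEps_limit : Tendsto (fun s : ℝ => (∑' p, hEps s p) / s) (𝓝[>] 0) (𝓝 (∑' p, hEll p)) := by
  simp_rw [← tsum_div_const]
  refine tendsto_tsum_of_dominated_convergence hEll_summable ?_ ?_
  · intro p
    have h2 := prime_two_le p
    unfold hEps hEll
    set P : ℝ := ((p : ℕ) : ℝ)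
    have hP0 : 0 < P := by linarith
    have hd : HasDerivAt (fun s : ℝ => 1 - P ^ (-s)) (Real.log P) 0 := by
      have h3 : HasDerivAt (fun s : ℝ => Real.exp (Real.log P * -s))
          (Real.exp (Real.log P * -0) * (Real.log P * -1)) 0 :=
        (((hasDerivAt_id (0 : ℝ)).neg).const_mul (Real.log P)).exp
      have h4 := h3.const_sub 1
      have e1 : (fun s : ℝ => 1 - P ^ (-s)) = fun s : ℝ => 1 - Real.exp (Real.log P * -s) := by
        funext s
        rw [Real.rpow_def_of_pos hP0]
      have e2 : Real.log P = -(Real.exp (Real.log P * -0) * (Real.log P * -1)) := by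
        rw [neg_zero, mul_zero, Real.exp_zero]; ring
      rw [e1]
      exact h4.congr_deriv e2.symm
    have h5 := hd.tendsto_slope_zero_right
    simp only [zero_add, neg_zero, Real.rpow_zero, sub_self, sub_zero, smul_eq_mul] at h5
    have h6 : Tendsto (fun s : ℝ => P ^ (-s)) (𝓝[>] 0) (𝓝 1) := by
      have h8 := hd.continuousAt.tendsto.const_sub 1
      have h9 : Tendsto (fun s : ℝ => P ^ (-s)) (𝓝 0) (𝓝 1) := by
        simpa using h8
      exact h9.mono_left nhdsWithin_le_nhds
    have h7 := (h6.mul h5).div_const (P * (P - 1))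
    rw [one_mul] at h7
    refine h7.congr fun s => ?_
    ring
  · filter_upwards [self_mem_nhdsWithin] with s hs p
    have hs : (0 : ℝ) < s := hs
    obtain ⟨b1, b2⟩ := hEps_bounds hs p
    rw [Real.norm_eq_abs, abs_of_nonneg (by positivity), div_le_iff₀ hs]
    linarith

lemma hbase : Tendsto (fun R => hS 1 R - 1 * Real.log R) atTop (𝓝 cGY) := by
  obtain ⟨A, hA, hAS⟩ := lemS
  obtain ⟨a, b, hab⟩ := hAS 1 le_rfl
  set L : ℝ := b - a * Real.eulerMascheroniConstant with hL
  set C : ℝ := A * wGY 1 + 2 * |a| with hCdef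
  set u : ℕ → ℝ := fun n => (moebius n : ℝ) ^ 2 / (n.totient : ℝ) - a * (1 / (n : ℝ)) with hu
  have hU : ∀ N : ℕ, |∑ j ∈ range (N + 1), u (j + 1) - L| ≤ C / √((N + 1 : ℕ) : ℝ) := by
    intro N
    have hN1 : (1 : ℝ) ≤ ((N + 1 : ℕ) : ℝ) := by
      push_cast; linarith [show (0:ℝ) ≤ N by positivity]
    have e1 : ∑ j ∈ range (N + 1), u (j + 1) = hS 1 ((N + 1 : ℕ) : ℝ) - a * hT ((N + 1 : ℕ) : ℝ) := by
      unfold hS hT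
      rw [Nat.floor_natCast, mul_sum, filter_true_of_mem (by simp), ← sum_sub_distrib,
        range_eq_Ico, sum_Ico_add' u 0 (N + 1) 1]
      rfl
    have h1 := hab ((N + 1 : ℕ) : ℝ) (by linarith)
    have h2 := hE_big hN1
    rw [e1]
    set x : ℝ := ((N + 1 : ℕ) : ℝ)
    have e2 : hS 1 x - a * hT x - L = (hS 1 x - a * Real.log x - b) - a * hE x := by
      unfold hE; rw [hL]; ring
    have hsx : 1 ≤ √x := by rw [Real.one_le_sqrt]; exact hN1
    have h3 : 2 / x ≤ 2 / √x := by
      gcongr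
      rw [Real.sqrt_le_left (by linarith)]; nlinarith
    rw [e2]
    calc _ ≤ |hS 1 x - a * Real.log x - b| + |a * hE x| := abs_sub _ _
      _ ≤ A * wGY 1 / √x + |a| * (2 / √x) := by
          rw [abs_mul]
          gcongr
          exact h2.trans h3
      _ = C / √x := by rw [hCdef]; ring
  have hD : ∀ s : ℝ, 0 < s →
      |((∑' n, hF s n) - a * ∑' n, hZ s n) - L| ≤ s * (C * ∑' d : ℕ, √(d : ℝ) / (d : ℝ) ^ 2) := by
    intro s hs
    refine abel_bound u L C hU s _ hs ?_
    refine ((hF_summable hs).hasSum.sub ((hZ_summable hs).hasSum.mul_left a)).congr_fun ?_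
    intro n
    unfold hF hZ
    simp only [hu]
    rcases Nat.eq_zero_or_pos n with rfl | hn
    · rw [Nat.cast_zero, Real.zero_rpow (by linarith), Real.zero_rpow (by linarith)]; simp
    have hn0 : (0 : ℝ) < n := by exact_mod_cast hn
    rw [neg_add, Real.rpow_add hn0, Real.rpow_neg_one]
    ring
  have tid : Tendsto (fun s : ℝ => s) (𝓝[>] 0) (𝓝 0) := tendsto_id.mono_left nhdsWithin_le_nhds
  have hDlim : Tendsto (fun s : ℝ => (∑' n, hF s n) - a * ∑' n, hZ s n) (𝓝[>] 0) (𝓝 L) := by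
    rw [tendsto_iff_norm_sub_tendsto_zero]
    have h0 := tid.mul_const (C * ∑' d : ℕ, √(d : ℝ) / (d : ℝ) ^ 2)
    rw [zero_mul] at h0
    refine squeeze_zero' (Eventually.of_forall fun _ => norm_nonneg _) ?_ h0
    filter_upwards [self_mem_nhdsWithin] with s hs
    exact hD s hs
  have hsZ : Tendsto (fun s : ℝ => s * ∑' n, hZ s n) (𝓝[>] 0) (𝓝 1) := by
    have h0 := (tid.mul hZ_limit).add_const 1
    rw [zero_mul, zero_add] at h0
    refine h0.congr' ?_
    filter_upwards [self_mem_nhdsWithin] with s hs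
    have hs : (0 : ℝ) < s := hs
    field_simp
    ring
  have hPex : ∀ s : ℝ, ∃ P : ℝ, 0 < s → ((∑' n, hF s n) = (∑' n, hZ s n) * P ∧
    1 + ∑' p, hEps s p ≤ P ∧ P ≤ Real.exp (s * ∑' p, hEll p)) := by
    intro s
    by_cases hs : 0 < s
    · obtain ⟨P, hP⟩ := hP_exists hs; exact ⟨P, fun _ => hP⟩
    · exact ⟨0, fun h => absurd h hs⟩
  choose P hP using hPex
  set K := ∑' p, hEll p with hK
  have hexp : Tendsto (fun s : ℝ => (Real.exp (s * K) - 1) / s) (𝓝[>] 0) (𝓝 K) := by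
    have h3 : HasDerivAt (fun s : ℝ => Real.exp (s * K)) (Real.exp (0 * K) * (1 * K)) 0 :=
      ((hasDerivAt_id (0 : ℝ)).mul_const K).exp
    have h5 := h3.tendsto_slope_zero_right
    simp only [zero_add, zero_mul, Real.exp_zero, smul_eq_mul, one_mul] at h5
    refine h5.congr fun s => ?_
    ring
  have hPlim : Tendsto (fun s : ℝ => (P s - 1) / s) (𝓝[>] 0) (𝓝 K) := by
    refine tendsto_of_tendsto_of_tendsto_of_le_of_le' hEps_limit hexp ?_ ?_
    · filter_upwards [self_mem_nhdsWithin] with s hs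
      have hs : (0 : ℝ) < s := hs
      have := (hP s hs).2.1
      gcongr
      linarith
    · filter_upwards [self_mem_nhdsWithin] with s hs
      have hs : (0 : ℝ) < s := hs
      have := (hP s hs).2.2
      gcongr
  have hprod := hsZ.mul hPlim
  rw [one_mul] at hprod
  have ha1 : Tendsto (fun s : ℝ => s * ((∑' n, hF s n) - a * ∑' n, hZ s n)
      - s * ((s * ∑' n, hZ s n) * ((P s - 1) / s))) (𝓝[>] 0) (𝓝 (0 * L - 0 * K)) :=
    (tid.mul hDlim).sub (tid.mul hprod)
  have ha2 : Tendsto (fun s : ℝ => (1 - a) * (s * ∑' n, hZ s n)) (𝓝[>] 0) (𝓝 (0 * L - 0 * K)) := by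
    refine ha1.congr' ?_
    filter_upwards [self_mem_nhdsWithin] with s hs
    have hs : (0 : ℝ) < s := hs
    rw [(hP s hs).1]
    field_simp
    ring
  have ha3 := tendsto_nhds_unique ha2 (hsZ.const_mul (1 - a))
  have ha : a = 1 := by linarith
  have hLK : L = K := by
    refine tendsto_nhds_unique hDlim (hprod.congr' ?_)
    filter_upwards [self_mem_nhdsWithin] with s hs
    have hs : (0 : ℝ) < s := hs
    rw [(hP s hs).1, ha]
    field_simp
  have hb : b = cGY := by
    have : cGY = Real.eulerMascheroniConstant + K := rfl
    rw [this, ← hLK, hL, ha]; ring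
  have := asym_of_bound hab
  rwa [ha, hb] at this

end

theorem lemma3_hildebrand :
    ∃ A : ℝ, 0 < A ∧ ∀ (k : ℕ) (R : ℝ), 1 ≤ k → 1 ≤ R →
      |(∑ n ∈ (Finset.Icc 1 ⌊R⌋₊).filter (fun n => Nat.gcd n k = 1),
          (ArithmeticFunction.moebius n : ℝ) ^ 2 / (n.totient : ℝ))
        - ((k.totient : ℝ) / (k : ℝ)) * (Real.log R + cGY + vGY k)|
      ≤ A * wGY k / Real.sqrt R := by
  exact final hbase
end

section
/- There is a constant A > 0 such that for every positive integer k and every real R ≥ 1, |Σ_{r ≤ R} (μ²(r)/φ(r)) · Σ_{d | r, gcd(d,k) = 1} d·μ(d)/φ(d) − 𝔖(k)| ≤ A·k·d(k)/(R·φ(k)). -/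
open Finset ArithmeticFunction

lemma sum_inv_sq_tail (s : Finset ℕ) (y : ℝ) (hy : 0 < y) (hs : ∀ m ∈ s, y < (m : ℝ)) :
    ∑ m ∈ s, ((m : ℝ) ^ 2)⁻¹ ≤ 2 / y := by
  have hsub : s ⊆ Finset.Ioo ⌊y⌋₊ (s.sup id + 1) := by
    intro m hm
    rw [Finset.mem_Ioo]
    refine ⟨(Nat.floor_lt hy.le).2 (hs m hm), Nat.lt_succ_of_le (Finset.le_sup (f := id) hm)⟩
  calc ∑ m ∈ s, ((m : ℝ) ^ 2)⁻¹
      ≤ ∑ m ∈ Finset.Ioo ⌊y⌋₊ (s.sup id + 1), ((m : ℝ) ^ 2)⁻¹ :=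
        Finset.sum_le_sum_of_subset_of_nonneg hsub (fun _ _ _ => by positivity)
    _ ≤ 2 / ((⌊y⌋₊ : ℝ) + 1) := sum_Ioo_inv_sq_le _ _
    _ ≤ 2 / y := by
        have := Nat.lt_floor_add_one y
        gcongr

/-- reindexing of multiples -/
lemma sum_multiples (s : Finset ℕ) (d : ℕ) (g : ℕ → ℝ) :
    ∑ b ∈ s with d ∣ b, g (b / d) = ∑ m ∈ (s.filter (d ∣ ·)).image (· / d), g m := by
  rw [Finset.sum_image]
  intro a ha b hb h
  simp only [Finset.coe_filter, Set.mem_ofPred_eq] at ha hb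
  exact (Nat.div_left_inj ha.2 hb.2).1 h

noncomputable def Zc : ℝ := ∑' n : ℕ, (n : ℝ) ^ (-(3 / 2) : ℝ)

lemma summable_Z : Summable (fun n : ℕ => (n : ℝ) ^ (-(3 / 2) : ℝ)) :=
  Real.summable_nat_rpow.2 (by norm_num)

lemma sum_le_Z (s : Finset ℕ) : ∑ n ∈ s, (n : ℝ) ^ (-(3 / 2) : ℝ) ≤ Zc :=
  summable_Z.sum_le_tsum s (fun _ _ => by positivity)

lemma Zc_pos : 0 < Zc := by
  have := sum_le_Z {1}
  simp at this
  linarith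

lemma prod_one_sub_sq (n : ℕ) : ∏ m ∈ Finset.Ioc 1 (n + 1), (1 - ((m : ℝ) ^ 2)⁻¹)
    = ((n : ℝ) + 2) / (2 * ((n : ℝ) + 1)) := by
  induction n with
  | zero => simp
  | succ n ih =>
    rw [Finset.prod_Ioc_succ_top (by omega), ih]
    push_cast
    field_simp
    ring

lemma prod_primes_ge (b : ℕ) : (1 / 2 : ℝ) ≤ ∏ p ∈ b.primeFactors, (1 - ((p : ℝ) ^ 2)⁻¹) := by
  have hsub : b.primeFactors ⊆ Finset.Ioc 1 (b + 1) := by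
    intro p hp
    rw [Finset.mem_Ioc]
    exact ⟨(Nat.prime_of_mem_primeFactors hp).one_lt,
      (Nat.le_of_mem_primeFactors hp).trans (Nat.le_succ _)⟩
  have h0 : ∀ m ∈ Finset.Ioc 1 (b + 1), 0 ≤ (1 - ((m : ℝ) ^ 2)⁻¹) := by
    intro m hm
    rw [Finset.mem_Ioc] at hm
    have : (1 : ℝ) ≤ (m : ℝ) ^ 2 := by
      have : (1 : ℝ) ≤ m := by exact_mod_cast hm.1.le
      nlinarith
    linarith [inv_le_one_of_one_le₀ this]
  calc (1 / 2 : ℝ) ≤ ((b : ℝ) + 2) / (2 * ((b : ℝ) + 1)) := by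
        rw [div_le_div_iff₀ (by norm_num) (by positivity)]
        linarith
    _ = ∏ m ∈ Finset.Ioc 1 (b + 1), (1 - ((m : ℝ) ^ 2)⁻¹) := (prod_one_sub_sq b).symm
    _ = (∏ m ∈ Finset.Ioc 1 (b + 1) \ b.primeFactors, (1 - ((m : ℝ) ^ 2)⁻¹)) *
        ∏ m ∈ b.primeFactors, (1 - ((m : ℝ) ^ 2)⁻¹) := (Finset.prod_sdiff hsub).symm
    _ ≤ 1 * ∏ m ∈ b.primeFactors, (1 - ((m : ℝ) ^ 2)⁻¹) := by
        gcongr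
        · exact Finset.prod_nonneg fun i hi => h0 i (hsub hi)
        · refine Finset.prod_le_one (fun i hi => h0 i (Finset.sdiff_subset hi)) ?_
          intro i _
          have : 0 ≤ ((i : ℝ) ^ 2)⁻¹ := by positivity
          linarith
    _ = _ := one_mul _

noncomputable def invA : ArithmeticFunction ℝ := ⟨fun d => (d : ℝ)⁻¹, by simp⟩

lemma invA_mult : invA.IsMultiplicative := by
  refine ⟨by simp [invA], ?_⟩
  intro m n _
  simp [invA, mul_comm]

lemma div_totient_le (b : ℕ) (hb : Squarefree b) :
    (b : ℝ) / (b.totient : ℝ) ≤ 2 * ∑ d ∈ b.divisors, (d : ℝ)⁻¹ := by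
  have hb0 : 0 < b := Nat.pos_of_ne_zero hb.ne_zero
  have h1 : (b.totient : ℝ) = b * ∏ p ∈ b.primeFactors, (1 - (p : ℝ)⁻¹) := by
    have := Nat.totient_eq_mul_prod_factors b
    have h := congrArg (fun q : ℚ => (q : ℝ)) this
    push_cast at h
    exact h
  have h2 : ∏ p ∈ b.primeFactors, (1 + (p : ℝ)⁻¹) = ∑ d ∈ b.divisors, (d : ℝ)⁻¹ :=
    invA_mult.prodPrimeFactors_one_add_of_squarefree hb
  have h3 := prod_primes_ge b
  have h4 : ∏ p ∈ b.primeFactors, (1 - ((p : ℝ) ^ 2)⁻¹) =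
      (∏ p ∈ b.primeFactors, (1 - (p : ℝ)⁻¹)) * ∏ p ∈ b.primeFactors, (1 + (p : ℝ)⁻¹) := by
    rw [← Finset.prod_mul_distrib]
    refine Finset.prod_congr rfl fun p _ => ?_
    rw [← inv_pow]; ring
  rw [h4, h2] at h3
  have hbR : (0 : ℝ) < b := by exact_mod_cast hb0
  have ht : (0 : ℝ) < b.totient := by exact_mod_cast Nat.totient_pos.2 hb0
  rw [div_le_iff₀ ht, h1]
  nlinarith

lemma inv_totient_sq_le (b : ℕ) (hb : Squarefree b) :
    ((b.totient : ℝ) ^ 2)⁻¹ ≤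
      4 * Zc * ∑ d ∈ b.divisors, (d : ℝ) ^ (-(1 / 2) : ℝ) * ((b : ℝ) ^ 2)⁻¹ := by
  have hb0 : 0 < b := Nat.pos_of_ne_zero hb.ne_zero
  have hbR : (0 : ℝ) < b := by exact_mod_cast hb0
  have ht : (0 : ℝ) < b.totient := by exact_mod_cast Nat.totient_pos.2 hb0
  have h1 := div_totient_le b hb
  have h2 : (∑ d ∈ b.divisors, (d : ℝ)⁻¹) ^ 2 ≤
      (∑ d ∈ b.divisors, (d : ℝ) ^ (-(3 / 2) : ℝ)) *
        ∑ d ∈ b.divisors, (d : ℝ) ^ (-(1 / 2) : ℝ) := by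
    refine Finset.sum_sq_le_sum_mul_sum_of_sq_le_mul _ (fun _ _ => by positivity)
      (fun _ _ => by positivity) ?_
    intro d hd
    have hd0 : (0 : ℝ) < d := by exact_mod_cast Nat.pos_of_mem_divisors hd
    rw [← Real.rpow_add hd0]
    norm_num [Real.rpow_neg hd0.le]
  have h3 : (∑ d ∈ b.divisors, (d : ℝ)⁻¹) ^ 2 ≤
      Zc * ∑ d ∈ b.divisors, (d : ℝ) ^ (-(1 / 2) : ℝ) :=
    h2.trans (mul_le_mul_of_nonneg_right (sum_le_Z _) (by positivity))
  have h4 : ((b : ℝ) / (b.totient : ℝ)) ^ 2 ≤ (2 * ∑ d ∈ b.divisors, (d : ℝ)⁻¹) ^ 2 := by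
    gcongr
  have h5 : ((b.totient : ℝ) ^ 2)⁻¹ = ((b : ℝ) / (b.totient : ℝ)) ^ 2 * ((b : ℝ) ^ 2)⁻¹ := by
    field_simp
  rw [h5, ← Finset.sum_mul, ← mul_assoc]
  gcongr
  nlinarith

lemma totient_tail (s : Finset ℕ) (y : ℝ) (hy : 0 < y)
    (hs : ∀ b ∈ s, Squarefree b ∧ y < (b : ℝ)) :
    ∑ b ∈ s, ((b.totient : ℝ) ^ 2)⁻¹ ≤ 8 * Zc ^ 2 / y := by
  have hZ := Zc_pos
  have key : ∀ d : ℕ, 0 < d → ∑ b ∈ s with d ∣ b, ((b : ℝ) ^ 2)⁻¹ ≤ 2 / ((d : ℝ) * y) := by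
    intro d hd
    have hdR : (0 : ℝ) < d := by exact_mod_cast hd
    have e1 : ∑ b ∈ s with d ∣ b, ((b : ℝ) ^ 2)⁻¹ =
        ((d : ℝ) ^ 2)⁻¹ * ∑ b ∈ s with d ∣ b, (((b / d : ℕ) : ℝ) ^ 2)⁻¹ := by
      rw [Finset.mul_sum]
      refine Finset.sum_congr rfl fun b hb => ?_
      rw [Nat.cast_div (Finset.mem_filter.1 hb).2 hdR.ne', div_pow, inv_div]
      field_simp
    rw [e1, sum_multiples s d (fun m => ((m : ℝ) ^ 2)⁻¹)]
    have := sum_inv_sq_tail ((s.filter (d ∣ ·)).image (· / d)) (y / d) (by positivity) (by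
      intro m hm
      obtain ⟨b, hb, rfl⟩ := Finset.mem_image.1 hm
      rw [Finset.mem_filter] at hb
      rw [Nat.cast_div hb.2 hdR.ne']
      have := (hs b hb.1).2
      gcongr)
    calc _ ≤ ((d : ℝ) ^ 2)⁻¹ * (2 / (y / d)) := by gcongr
      _ = _ := by field_simp
  calc ∑ b ∈ s, ((b.totient : ℝ) ^ 2)⁻¹
      ≤ ∑ b ∈ s, 4 * Zc * ∑ d ∈ b.divisors, (d : ℝ) ^ (-(1 / 2) : ℝ) * ((b : ℝ) ^ 2)⁻¹ :=
        Finset.sum_le_sum fun b hb => inv_totient_sq_le b (hs b hb).1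
    _ = 4 * Zc * ∑ d ∈ s.biUnion Nat.divisors, ∑ b ∈ s with d ∣ b,
          (d : ℝ) ^ (-(1 / 2) : ℝ) * ((b : ℝ) ^ 2)⁻¹ := by
        rw [← Finset.mul_sum]
        congr 1
        refine Finset.sum_comm' ?_
        intro b d
        simp only [Finset.mem_filter, Finset.mem_biUnion, Nat.mem_divisors]
        constructor
        · rintro ⟨h1, h2, h3⟩
          exact ⟨⟨h1, h2⟩, b, h1, h2, h3⟩
        · rintro ⟨⟨h1, h2⟩, -⟩
          exact ⟨h1, h2, (hs b h1).1.ne_zero⟩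
    _ ≤ 4 * Zc * ∑ d ∈ s.biUnion Nat.divisors, (d : ℝ) ^ (-(3 / 2) : ℝ) * (2 / y) := by
        gcongr with d hd
        obtain ⟨b, _, hd⟩ := Finset.mem_biUnion.1 hd
        have hd0 := Nat.pos_of_mem_divisors hd
        have hdR : (0 : ℝ) < d := by exact_mod_cast hd0
        rw [← Finset.mul_sum]
        calc _ ≤ (d : ℝ) ^ (-(1 / 2) : ℝ) * (2 / ((d : ℝ) * y)) := by
              gcongr; exact key d hd0
          _ = _ := by
              have : (d : ℝ) ^ (-(3 / 2) : ℝ) = (d : ℝ) ^ (-(1 / 2) : ℝ) * (d : ℝ)⁻¹ := by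
                rw [← Real.rpow_neg_one, ← Real.rpow_add hdR]; norm_num
              rw [this]; field_simp
    _ ≤ 4 * Zc * (Zc * (2 / y)) := by
        rw [← Finset.sum_mul]
        gcongr
        exact sum_le_Z _
    _ = _ := by ring

/-- the arithmetic function `d ↦ [gcd(d,k)=1] d μ(d)/φ(d)` -/
noncomputable def hA (k : ℕ) : ArithmeticFunction ℝ :=
  ⟨fun d => if Nat.gcd d k = 1 then (d : ℝ) * (ArithmeticFunction.moebius d : ℝ) / (d.totient : ℝ)
    else 0, by simp⟩

lemma hA_apply (k d : ℕ) : hA k d = if Nat.gcd d k = 1 then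
    (d : ℝ) * (ArithmeticFunction.moebius d : ℝ) / (d.totient : ℝ) else 0 := rfl

lemma hA_mult (k : ℕ) : (hA k).IsMultiplicative := by
  refine ⟨by simp [hA_apply], ?_⟩
  intro m n hmn
  have h : Nat.gcd (m * n) k = 1 ↔ Nat.gcd m k = 1 ∧ Nat.gcd n k = 1 :=
    Nat.coprime_mul_iff_left
  simp only [hA_apply, h]
  by_cases h1 : Nat.gcd m k = 1
  · by_cases h2 : Nat.gcd n k = 1
    · rw [if_pos ⟨h1, h2⟩, if_pos h1, if_pos h2, isMultiplicative_moebius.map_mul_of_coprime hmn,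
        Nat.totient_mul hmn]
      push_cast
      rw [div_mul_div_comm]
      ring
    · simp [h2]
  · simp [h1]

/-- the arithmetic function `μ²/φ` -/
noncomputable def gA : ArithmeticFunction ℝ :=
  ⟨fun r => (ArithmeticFunction.moebius r : ℝ) ^ 2 / (r.totient : ℝ), by simp⟩

lemma gA_apply (r : ℕ) : gA r = (ArithmeticFunction.moebius r : ℝ) ^ 2 / (r.totient : ℝ) := rfl

lemma gA_mult : gA.IsMultiplicative := by
  refine ⟨by simp [gA_apply], ?_⟩
  intro m n hmn
  rw [gA_apply, gA_apply, gA_apply, isMultiplicative_moebius.map_mul_of_coprime hmn,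
    Nat.totient_mul hmn]
  push_cast
  rw [div_mul_div_comm]
  ring

/-- the summand -/
noncomputable def fA (k : ℕ) : ArithmeticFunction ℝ := gA.pmul (hA k * (ArithmeticFunction.zeta : ArithmeticFunction ℝ))

lemma fA_mult (k : ℕ) : (fA k).IsMultiplicative :=
  gA_mult.pmul ((hA_mult k).mul isMultiplicative_zeta.natCast)

lemma fA_apply (k r : ℕ) : fA k r = ((ArithmeticFunction.moebius r : ℝ) ^ 2 / (r.totient : ℝ)) *
    ∑ d ∈ r.divisors, hA k d := by
  rw [fA, pmul_apply, coe_mul_zeta_apply, gA_apply]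

lemma fA_apply' (k r : ℕ) : fA k r = ((ArithmeticFunction.moebius r : ℝ) ^ 2 / (r.totient : ℝ)) *
            ∑ d ∈ r.divisors.filter (fun d => Nat.gcd d k = 1),
              (d : ℝ) * (ArithmeticFunction.moebius d : ℝ) / (d.totient : ℝ) := by
  rw [fA_apply, Finset.sum_filter]
  rfl

lemma one_add_hA (k p : ℕ) (hp : p.Prime) :
    1 + hA k p = if p ∣ k then 1 else -1 / ((p : ℝ) - 1) := by
  have h2 : (1 : ℝ) < p := by exact_mod_cast hp.one_lt
  have h3 : (p : ℝ) - 1 ≠ 0 := by linarith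
  rw [hA_apply]
  have : Nat.gcd p k = 1 ↔ ¬ p ∣ k := hp.coprime_iff_not_dvd
  by_cases h : p ∣ k
  · simp [this, h]
  · rw [if_neg h, if_pos (this.2 h), moebius_apply_prime hp, Nat.totient_prime hp,
      Nat.cast_sub hp.one_lt.le]
    push_cast
    field_simp
    ring

lemma totient_squarefree (r : ℕ) (hr : Squarefree r) :
    (r.totient : ℝ) = ∏ p ∈ r.primeFactors, ((p : ℝ) - 1) := by
  have := Nat.totient_eq_div_primeFactors_mul r
  rw [Nat.prod_primeFactors_of_squarefree hr, Nat.div_self (Nat.pos_of_ne_zero hr.ne_zero),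
    one_mul] at this
  rw [this, Nat.cast_prod]
  refine Finset.prod_congr rfl fun p hp => ?_
  rw [Nat.cast_sub (Nat.prime_of_mem_primeFactors hp).one_lt.le, Nat.cast_one]

lemma fA_of_not_squarefree (k r : ℕ) (hr : ¬ Squarefree r) : fA k r = 0 := by
  rw [fA_apply, moebius_eq_zero_of_not_squarefree hr]
  simp

lemma abs_fA (k r : ℕ) (hk : k ≠ 0) (hr : Squarefree r) :
    |fA k r| = ((Nat.gcd r k).totient : ℝ) * ((r.totient : ℝ) ^ 2)⁻¹ := by
  have hμ : ((ArithmeticFunction.moebius r : ℝ)) ^ 2 = 1 := by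
    exact_mod_cast moebius_sq_eq_one_of_squarefree hr
  have ht : (0 : ℝ) < r.totient := by
    exact_mod_cast Nat.totient_pos.2 (Nat.pos_of_ne_zero hr.ne_zero)
  have hg : Squarefree (Nat.gcd r k) := hr.squarefree_of_dvd (Nat.gcd_dvd_left _ _)
  have hS : |∑ d ∈ r.divisors, hA k d| = ((Nat.gcd r k).totient : ℝ) / r.totient := by
    rw [← (hA_mult k).prodPrimeFactors_one_add_of_squarefree hr, Finset.abs_prod,
      totient_squarefree _ hg, totient_squarefree _ hr, Nat.primeFactors_gcd hr.ne_zero hk,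
      ← Finset.filter_mem_eq_inter, Finset.prod_filter, ← Finset.prod_div_distrib]
    refine Finset.prod_congr rfl fun p hp => ?_
    have hpp := Nat.prime_of_mem_primeFactors hp
    have h2 : (1 : ℝ) < p := by exact_mod_cast hpp.one_lt
    have h3 : 0 < (p : ℝ) - 1 := by linarith
    rw [one_add_hA k p hpp]
    by_cases h : p ∣ k
    · rw [if_pos h, if_pos (Nat.mem_primeFactors.2 ⟨hpp, h, hk⟩), div_self h3.ne', abs_one]
    · rw [if_neg h, if_neg (fun h' => h (Nat.dvd_of_mem_primeFactors h')), abs_div, abs_of_pos h3]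
      simp
  rw [fA_apply, hμ, abs_mul, hS, abs_of_pos (by positivity)]
  field_simp

lemma dvd_div_totient (a k : ℕ) (hk : k ≠ 0) (ha : a ∣ k) :
    (a : ℝ) / a.totient ≤ (k : ℝ) / k.totient := by
  obtain ⟨c, rfl⟩ := ha
  have ha0 : a ≠ 0 := left_ne_zero_of_mul hk
  have hat : (0 : ℝ) < a.totient := by exact_mod_cast Nat.totient_pos.2 (Nat.pos_of_ne_zero ha0)
  have hkt : (0 : ℝ) < (a * c).totient := by
    exact_mod_cast Nat.totient_pos.2 (Nat.pos_of_ne_zero hk)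
  have hform : ∀ n : ℕ, (n.totient : ℝ) = n * ∏ p ∈ n.primeFactors, (1 - (p : ℝ)⁻¹) := by
    intro n
    have h := congrArg (fun q : ℚ => (q : ℝ)) (Nat.totient_eq_mul_prod_factors n)
    push_cast at h
    exact h
  have h0 : ∀ p ∈ (a * c).primeFactors, 0 ≤ (1 - (p : ℝ)⁻¹) := by
    intro p hp
    have : (1 : ℝ) ≤ p := by exact_mod_cast (Nat.prime_of_mem_primeFactors hp).one_lt.le
    linarith [inv_le_one_of_one_le₀ this]
  have hsub : a.primeFactors ⊆ (a * c).primeFactors :=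
    Nat.primeFactors_mono (Dvd.intro c rfl) hk
  have hprod : ∏ p ∈ (a * c).primeFactors, (1 - (p : ℝ)⁻¹) ≤
      ∏ p ∈ a.primeFactors, (1 - (p : ℝ)⁻¹) := by
    rw [← Finset.prod_sdiff hsub]
    refine mul_le_of_le_one_left (Finset.prod_nonneg fun i hi => h0 i (hsub hi)) ?_
    refine Finset.prod_le_one (fun i hi => h0 i (Finset.sdiff_subset hi)) ?_
    intro i _
    have : 0 ≤ (i : ℝ)⁻¹ := by positivity
    linarith
  have h' : ((a * c).totient : ℝ) ≤ c * a.totient := by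
    rw [hform (a * c), hform a]
    push_cast
    calc _ ≤ (a : ℝ) * c * ∏ p ∈ a.primeFactors, (1 - (p : ℝ)⁻¹) := by gcongr
      _ = _ := by ring
  rw [div_le_div_iff₀ hat hkt]
  push_cast
  have : (0 : ℝ) ≤ a := by positivity
  nlinarith

lemma fA_tail (k : ℕ) (hk : k ≠ 0) (y : ℝ) (hy : 0 < y) (s : Finset ℕ)
    (hs : ∀ r ∈ s, r = 0 ∨ y < (r : ℝ)) :
    ∑ r ∈ s, |fA k r| ≤ 8 * Zc ^ 2 / y * (k.divisors.card * ((k : ℝ) / k.totient)) := by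
  have hsq : ∑ r ∈ s, |fA k r| = ∑ r ∈ s with Squarefree r, |fA k r| := by
    rw [Finset.sum_filter]
    refine Finset.sum_congr rfl fun r _ => ?_
    split_ifs with h
    · rfl
    · rw [fA_of_not_squarefree k r h, abs_zero]
  set t := s.filter Squarefree with ht
  have ht' : ∀ r ∈ t, Squarefree r ∧ y < (r : ℝ) := by
    intro r hr
    rw [ht, Finset.mem_filter] at hr
    exact ⟨hr.2, (hs r hr.1).resolve_left hr.2.ne_zero⟩
  have key : ∀ a ∈ k.divisors, ∑ r ∈ t with a ∣ r, (a.totient : ℝ) * ((r.totient : ℝ) ^ 2)⁻¹ ≤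
      8 * Zc ^ 2 / y * ((k : ℝ) / k.totient) := by
    intro a ha
    have hak := Nat.dvd_of_mem_divisors ha
    have ha0 := Nat.pos_of_mem_divisors ha
    have haR : (0 : ℝ) < a := by exact_mod_cast ha0
    have hat : (0 : ℝ) < a.totient := by exact_mod_cast Nat.totient_pos.2 ha0
    have e1 : ∑ r ∈ t with a ∣ r, (a.totient : ℝ) * ((r.totient : ℝ) ^ 2)⁻¹ =
        (a.totient : ℝ)⁻¹ * ∑ r ∈ t with a ∣ r, (((r / a).totient : ℝ) ^ 2)⁻¹ := by
      rw [Finset.mul_sum]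
      refine Finset.sum_congr rfl fun r hr => ?_
      rw [Finset.mem_filter] at hr
      obtain ⟨c, rfl⟩ := hr.2
      have hcop : Nat.Coprime a c := Nat.coprime_of_squarefree_mul (ht' _ hr.1).1
      rw [Nat.mul_div_cancel_left c ha0, Nat.totient_mul hcop]
      push_cast
      rw [mul_pow, mul_inv]
      field_simp
    rw [e1, sum_multiples t a (fun m => ((m.totient : ℝ) ^ 2)⁻¹)]
    have := totient_tail ((t.filter (a ∣ ·)).image (· / a)) (y / a) (by positivity) (by
      intro m hm
      obtain ⟨b, hb, rfl⟩ := Finset.mem_image.1 hm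
      rw [Finset.mem_filter] at hb
      have h1 := ht' b hb.1
      refine ⟨h1.1.squarefree_of_dvd (Nat.div_dvd_of_dvd hb.2), ?_⟩
      rw [Nat.cast_div hb.2 haR.ne']
      have := h1.2
      gcongr)
    calc _ ≤ (a.totient : ℝ)⁻¹ * (8 * Zc ^ 2 / (y / a)) := by gcongr
      _ = 8 * Zc ^ 2 / y * ((a : ℝ) / a.totient) := by field_simp
      _ ≤ _ := by
        gcongr ?_ * ?_
        exact dvd_div_totient a k hk hak
  rw [hsq]
  calc ∑ r ∈ t, |fA k r| ≤ ∑ r ∈ t, ∑ a ∈ k.divisors with a ∣ r,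
        (a.totient : ℝ) * ((r.totient : ℝ) ^ 2)⁻¹ := by
        refine Finset.sum_le_sum fun r hr => ?_
        rw [abs_fA k r hk (ht' r hr).1]
        exact Finset.single_le_sum
          (f := fun a : ℕ => (a.totient : ℝ) * ((r.totient : ℝ) ^ 2)⁻¹)
          (fun _ _ => by positivity)
          (Finset.mem_filter.2 ⟨Nat.mem_divisors.2 ⟨Nat.gcd_dvd_right r k, hk⟩,
            Nat.gcd_dvd_left r k⟩)
    _ = ∑ a ∈ k.divisors, ∑ r ∈ t with a ∣ r,
        (a.totient : ℝ) * ((r.totient : ℝ) ^ 2)⁻¹ := by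
        refine Finset.sum_comm' ?_
        intro r a
        simp only [Finset.mem_filter]
        tauto
    _ ≤ ∑ a ∈ k.divisors, 8 * Zc ^ 2 / y * ((k : ℝ) / k.totient) := Finset.sum_le_sum key
    _ = _ := by
        rw [Finset.sum_const, nsmul_eq_mul]
        ring

lemma fA_summable (k : ℕ) (hk : k ≠ 0) : Summable (fun r => ‖fA k r‖) := by
  refine summable_of_sum_le (c := 8 * Zc ^ 2 / (1 / 2) * (k.divisors.card * ((k : ℝ) / k.totient)))
    (fun _ => norm_nonneg _) ?_
  intro s
  refine fA_tail k hk (1 / 2) (by norm_num) s ?_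
  intro r _
  rcases Nat.eq_zero_or_pos r with h | h
  · exact Or.inl h
  · right
    have : (1 : ℝ) ≤ r := by exact_mod_cast h
    linarith

lemma fA_diff (k : ℕ) (hk : k ≠ 0) (R : ℝ) (hR : 1 ≤ R) :
    |∑ r ∈ Finset.Icc 1 ⌊R⌋₊, fA k r - ∑' r, fA k r| ≤
      8 * Zc ^ 2 / R * (k.divisors.card * ((k : ℝ) / k.totient)) := by
  have hsum : HasSum (fun r => fA k r) (∑' r, fA k r) := (fA_summable k hk).of_norm.hasSum
  have hlim := ((tendsto_const_nhds (x := ∑ r ∈ Finset.Icc 1 ⌊R⌋₊, fA k r)).sub hsum).abs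
  refine le_of_tendsto hlim ?_
  filter_upwards [Filter.eventually_ge_atTop (Finset.Icc 1 ⌊R⌋₊)] with T hT
  rw [abs_sub_comm, ← Finset.sum_sdiff hT, add_sub_cancel_right]
  refine (Finset.abs_sum_le_sum_abs _ _).trans (fA_tail k hk R (by linarith) _ ?_)
  intro r hr
  rw [Finset.mem_sdiff, Finset.mem_Icc, not_and_or] at hr
  rcases hr.2 with h | h
  · left; omega
  · right
    exact (Nat.floor_lt (by linarith)).1 (not_le.1 h)

lemma fA_prime (k p : ℕ) (hp : p.Prime) :
    1 + fA k p = if p ∣ k then (p : ℝ) / (p - 1) else 1 - 1 / ((p : ℝ) - 1) ^ 2 := by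
  have h2 : (1 : ℝ) < p := by exact_mod_cast hp.one_lt
  have h3 : (p : ℝ) - 1 ≠ 0 := by linarith
  rw [fA_apply, Nat.Prime.sum_divisors hp, (hA_mult k).map_one, add_comm (hA k p), one_add_hA k p hp,
    moebius_apply_prime hp, Nat.totient_prime hp, Nat.cast_sub hp.one_lt.le]
  split_ifs
  · push_cast; field_simp; ring
  · push_cast; field_simp; ring

lemma fA_tsum_pow (k p : ℕ) (hp : p.Prime) : ∑' e : ℕ, fA k (p ^ e) = 1 + fA k p := by
  rw [tsum_eq_sum (s := Finset.range 2)]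
  · simp [Finset.sum_range_succ, (fA_mult k).map_one]
  · intro e he
    rw [Finset.mem_range, not_lt] at he
    apply fA_of_not_squarefree
    intro h
    have := (Nat.squarefree_pow_iff hp.ne_one (by omega)).1 h
    omega

lemma fA_hasProd (k : ℕ) (hk : k ≠ 0) :
    HasProd (fun p : Nat.Primes => if (p : ℕ) ∣ k then ((p : ℕ) : ℝ) / (((p : ℕ) : ℝ) - 1)
      else 1 - 1 / (((p : ℕ) : ℝ) - 1) ^ 2) (∑' r, fA k r) := by
  have := EulerProduct.eulerProduct_hasProd (f := fun n => fA k n) (fA_mult k).map_one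
    (fun {m n} h => (fA_mult k).map_mul_of_coprime h) (fA_summable k hk) (by simp)
  have he : (fun p : Nat.Primes => if (p : ℕ) ∣ k then ((p : ℕ) : ℝ) / (((p : ℕ) : ℝ) - 1)
      else 1 - 1 / (((p : ℕ) : ℝ) - 1) ^ 2) = fun p : Nat.Primes => ∑' e : ℕ, fA k (p ^ e) := by
    funext p
    rw [fA_tsum_pow k p p.2, fA_prime k p p.2]
  rw [he]
  exact this

lemma hasProd_e (k : ℕ) (hk : k ≠ 0) (h2 : 2 ∣ k) :
    HasProd (fun p : Nat.Primes => if (p : ℕ) ∈ k.primeFactors then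
      (if 2 < (p : ℕ) then (((p : ℕ) : ℝ) - 1) / (((p : ℕ) : ℝ) - 2) else 2) else 1)
      (2 * ∏ p ∈ k.primeFactors.filter (fun p => 2 < p), ((p : ℝ) - 1) / ((p : ℝ) - 2)) := by
  set e : ℕ → ℝ := fun p => if p ∈ k.primeFactors then
      (if 2 < p then ((p : ℝ) - 1) / ((p : ℝ) - 2) else 2) else 1 with he
  have h1 : HasProd e (∏ p ∈ k.primeFactors, e p) :=
    hasProd_prod_of_ne_finset_one (fun b hb => by simp only [he, if_neg hb])
  have h3 : ∏ p ∈ k.primeFactors, e p =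
      2 * ∏ p ∈ k.primeFactors.filter (fun p => 2 < p), ((p : ℝ) - 1) / ((p : ℝ) - 2) := by
    have : ∏ p ∈ k.primeFactors, e p =
        ∏ p ∈ k.primeFactors, (if 2 < p then ((p : ℝ) - 1) / ((p : ℝ) - 2) else 2) :=
      Finset.prod_congr rfl fun p hp => by simp only [he, if_pos hp]
    have h4 : k.primeFactors.filter (fun p => ¬ 2 < p) = {2} := by
      ext p
      simp only [Finset.mem_filter, Nat.mem_primeFactors, Finset.mem_singleton]
      constructor
      · rintro ⟨⟨hp, -, -⟩, h⟩
        have := hp.two_le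
        omega
      · rintro rfl
        exact ⟨⟨Nat.prime_two, h2, hk⟩, by norm_num⟩
    rw [this, Finset.prod_ite, h4, Finset.prod_singleton, mul_comm]
  rw [h3] at h1
  have hsupp : Function.mulSupport e ⊆ {p | Nat.Prime p} := by
    intro p hp
    by_contra h
    refine hp ?_
    have : p ∉ k.primeFactors := fun h' => h (Nat.prime_of_mem_primeFactors h')
    simp only [he, if_neg this]
  have h5 := (hasProd_subtype_iff_of_mulSupport_subset hsupp).2 h1
  exact h5

lemma twin_hasProd : HasProd (fun p : Nat.Primes =>
    (if 2 < (p : ℕ) then 1 - 1 / (((p : ℕ) : ℝ) - 1) ^ 2 else 1)) twinC := by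
  refine Multipliable.hasProd ?_
  have h1 := fA_hasProd 2 two_ne_zero
  have h2 := hasProd_prod_of_ne_finset_one (L := SummationFilter.unconditional _)
      (f := fun p : Nat.Primes => if (p : ℕ) = 2 then (1 / 2 : ℝ) else 1)
      (s := {(⟨2, Nat.prime_two⟩ : Nat.Primes)}) (by
        intro b hb
        rw [if_neg]
        intro h
        exact hb (Finset.mem_singleton.2 (Subtype.ext h)))
  have h3 := (h1.mul h2).multipliable
  convert h3 using 2 with p
  have hp := p.2
  have hp2 := hp.two_le
  by_cases h : (p : ℕ) = 2
  · rw [h]; norm_num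
  · have h4 : ¬ (p : ℕ) ∣ 2 := fun h' => h ((Nat.prime_dvd_prime_iff_eq hp Nat.prime_two).1 h')
    rw [if_neg h4, if_neg h, if_pos (by omega), mul_one]

lemma tsum_eq_sing (k : ℕ) (hk : k ≠ 0) : ∑' r, fA k r = singSeries k := by
  have h := fA_hasProd k hk
  by_cases h2 : 2 ∣ k
  · rw [singSeries, if_pos ⟨h2, hk⟩]
    have h3 := (twin_hasProd.mul (hasProd_e k hk h2))
    rw [mul_comm 2 twinC, mul_assoc]
    refine h.unique ?_
    convert h3 using 2 with p
    have hp := p.2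
    have hp2 := hp.two_le
    by_cases hpk : (p : ℕ) ∣ k
    · rw [if_pos hpk, if_pos (Nat.mem_primeFactors.2 ⟨hp, hpk, hk⟩)]
      split_ifs with hlt
      · have : (3 : ℝ) ≤ (p : ℕ) := by exact_mod_cast hlt
        have h5 : ((p : ℕ) : ℝ) - 1 ≠ 0 := by linarith
        have h6 : ((p : ℕ) : ℝ) - 2 ≠ 0 := by linarith
        field_simp
        ring
      · have : (p : ℕ) = 2 := by omega
        rw [this]; norm_num
    · rw [if_neg hpk, if_neg (fun h' => hpk (Nat.dvd_of_mem_primeFactors h')), mul_one, if_pos]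
      have : (p : ℕ) ≠ 2 := fun h' => hpk (h' ▸ h2)
      omega
  · rw [singSeries, if_neg (fun h' => h2 h'.1)]
    refine h.unique (hasProd_zero_of_exists_eq_zero ⟨⟨2, Nat.prime_two⟩, ?_⟩)
    simp only [if_neg h2]
    norm_num

theorem lemma6_goldston :
    ∃ A : ℝ, 0 < A ∧ ∀ (k : ℕ) (R : ℝ), 1 ≤ k → 1 ≤ R →
      |(∑ r ∈ Finset.Icc 1 ⌊R⌋₊,
          ((ArithmeticFunction.moebius r : ℝ) ^ 2 / (r.totient : ℝ)) *
            ∑ d ∈ r.divisors.filter (fun d => Nat.gcd d k = 1),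
              (d : ℝ) * (ArithmeticFunction.moebius d : ℝ) / (d.totient : ℝ))
        - singSeries k|
      ≤ A * (k : ℝ) * (k.divisors.card : ℝ) / (R * (k.totient : ℝ)) := by
  have hZ := Zc_pos
  refine ⟨8 * Zc ^ 2, by positivity, ?_⟩
  intro k R hk hR
  have hk0 : k ≠ 0 := by omega
  have h := fA_diff k hk0 R hR
  rw [tsum_eq_sing k hk0] at h
  simp only [fA_apply'] at h
  refine h.trans (le_of_eq ?_)
  rw [div_mul_eq_mul_div, ← mul_div_assoc, ← mul_div_assoc, div_div]
  ring
end
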